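/- If V_* is a Steiner triple system, then there is an integer N such that for every integer u with u ≥ N and u ≡ 1 or 3 (mod 6), there exists a Steiner triple system U on u points containing a subsystem V isomorphic to V_* such that V is invariant under Aut U and the restriction map from Aut U to Aut V is a group isomorphism (i.e. Aut U induces the full group Aut V on V and Aut U ≅ Aut V). -/

import Mathlib

open Finset

noncomputable section
open scoped Classical

/-- `T` is the set of triples of a Steiner triple system on the finite type `α`:
every pair of distinct points lies in exactly one triple. -/
def IsSTS {α : Type*} (T : Finset (Finset α)) : Prop :=
  (∀ t ∈ T, t.card = 3) ∧
    ∀ p q : α, p ≠ q → ∃! t : Finset α, t ∈ T ∧ p ∈ t ∧ q ∈ t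

/-- `T` is the set of triples of a partial Steiner triple system on `α`:
every pair of distinct points lies in at most one triple. -/
def IsPSTS {α : Type*} (T : Finset (Finset α)) : Prop :=
  (∀ t ∈ T, t.card = 3) ∧
    ∀ p q : α, p ≠ q → ∀ t₁ ∈ T, ∀ t₂ ∈ T, p ∈ t₁ → q ∈ t₁ → p ∈ t₂ → q ∈ t₂ → t₁ = t₂

/-- `W` is a (closed) subsystem of the triple system `T`. -/
def IsSub {α : Type*} (T : Finset (Finset α)) (W : Finset α) : Prop :=
  ∀ t ∈ T, 2 ≤ (t ∩ W).card → t ⊆ W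

/-- `g` is an automorphism of the triple system `T`. -/
def IsAut {α : Type*} (T : Finset (Finset α)) (g : Equiv.Perm α) : Prop :=
  ∀ t : Finset α, t ∈ T ↔ t.image g ∈ T

/-- The automorphism group of a triple system, as a subgroup of the permutation group. -/
def autGroup {α : Type*} (T : Finset (Finset α)) : Subgroup (Equiv.Perm α) where
  carrier := {g : Equiv.Perm α | IsAut T g}
  one_mem' := by
    intro t
    simp
  mul_mem' := by
    intro a b ha hb t
    have h1 := hb t
    have h2 := ha (t.image b)
    have key : t.image ⇑(a * b) = (t.image ⇑b).image ⇑a := by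
      rw [Equiv.Perm.coe_mul, Finset.image_image]
    rw [key, ← h2]
    exact h1
  inv_mem' := by
    intro a ha t
    have h := ha (t.image ⇑a⁻¹)
    have key : (t.image ⇑a⁻¹).image ⇑a = t := by
      rw [Finset.image_image]
      have hc : (⇑a ∘ ⇑a⁻¹) = id := by
        funext x
        simp
      rw [hc, Finset.image_id]
    rw [key] at h
    exact h.symm

/-- `φ` embeds the triple system `S` onto a subsystem of `T`: it is injective, maps
triples of `S` to triples of `T`, and the triples of `T` inside the image of `φ` are
precisely the images of the triples of `S`. -/
def IsCopy {α β : Type*} [Fintype α] (S : Finset (Finset α)) (T : Finset (Finset β))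
    (φ : α → β) : Prop :=
  Function.Injective φ ∧ (∀ s ∈ S, s.image φ ∈ T) ∧
    ∀ t ∈ T, t ⊆ Finset.univ.image φ → ∃ s ∈ S, t = s.image φ

/-- The point set `W` is invariant under every automorphism of `T`. -/
def AutInvariant {β : Type*} (T : Finset (Finset β)) (W : Finset β) : Prop :=
  ∀ g : Equiv.Perm β, IsAut T g → W.image g = W

/-- For the copy of `S` inside `T` given by `φ`, restriction gives a group isomorphism
from `Aut T` onto `Aut S`: every automorphism of `T` induces (via `φ`) an automorphism
of `S`, and every automorphism of `S` is induced by exactly one automorphism of `T`. -/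
def AutRestrictIso {α β : Type*} (T : Finset (Finset β)) (S : Finset (Finset α))
    (φ : α → β) : Prop :=
  (∀ g : Equiv.Perm β, IsAut T g →
      ∃ h : Equiv.Perm α, IsAut S h ∧ ∀ x : α, g (φ x) = φ (h x)) ∧
    ∀ h : Equiv.Perm α, IsAut S h →
      ∃! g : Equiv.Perm β, IsAut T g ∧ ∀ x : α, g (φ x) = φ (h x)

/-- `φ` embeds `S` as an `Aut T`-invariant subsystem of `T` on which `Aut T` induces
the full automorphism group of `S`, with `Aut T ≅ Aut S` via restriction. -/
def FullEmbedding {α β : Type*} [Fintype α] (S : Finset (Finset α)) (T : Finset (Finset β))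
    (φ : α → β) : Prop :=
  IsCopy S T φ ∧ AutInvariant T (Finset.univ.image φ) ∧ AutRestrictIso T S φ

/-- The points of the projective space `PG(n,2)`: nonzero vectors of `GF(2)^{n+1}`. -/
abbrev PGPoint (n : ℕ) := {x : Fin (n + 1) → ZMod 2 // x ≠ 0}

/-- The lines of `PG(n,2)`: 3-sets of nonzero vectors summing to `0`. -/
def PGTriples (n : ℕ) : Finset (Finset (PGPoint n)) :=
  Finset.univ.filter fun t : Finset (PGPoint n) =>
    t.card = 3 ∧ ∑ v ∈ t, (v : Fin (n + 1) → ZMod 2) = 0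

/-- The smallest subsystem of `T` containing the point set `P`. -/
def GeneratedSub {α : Type*} [Fintype α] (T : Finset (Finset α)) (P : Finset α) : Finset α :=
  Finset.univ.filter fun x => ∀ W : Finset α, IsSub T W → P ⊆ W → x ∈ W

/-- `W` is a subsystem of `T` isomorphic to `PG(n,2)`. -/
def IsPGSub {α : Type*} [Fintype α] (n : ℕ) (T : Finset (Finset α)) (W : Finset α) : Prop :=
  ∃ φ : PGPoint n → α, IsCopy (PGTriples n) T φ ∧ Finset.univ.image φ = W

/-- A triple system is `PG(2,2)`-paired if any two distinct points lie in at least two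
subsystems isomorphic to `PG(2,2)`. -/
def PG22Paired {α : Type*} [Fintype α] (T : Finset (Finset α)) : Prop :=
  ∀ p q : α, p ≠ q → ∃ W₁ W₂ : Finset α, W₁ ≠ W₂ ∧
    (p ∈ W₁ ∧ q ∈ W₁ ∧ IsPGSub 2 T W₁) ∧ p ∈ W₂ ∧ q ∈ W₂ ∧ IsPGSub 2 T W₂

/-- `T` is `PG(3,2)`-2-pointed with respect to the points `p, q`: any four points
including `p` and `q` generate a subsystem isomorphic to `PG(2,2)` or `PG(3,2)`. -/
def PG32TwoPointed {α : Type*} [Fintype α] (T : Finset (Finset α)) (p q : α) : Prop :=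
  p ≠ q ∧ ∀ s : Finset α, s.card = 4 → p ∈ s → q ∈ s →
    IsPGSub 2 T (GeneratedSub T s) ∨ IsPGSub 3 T (GeneratedSub T s)

/-- The copy of `Y` inside `2Y+1`. -/
def dp0 {γ : Type*} (a : γ) : γ ⊕ γ ⊕ Unit := Sum.inl a

/-- The disjoint copy `Y₁` of `Y` inside `2Y+1`. -/
def dp1 {γ : Type*} (a : γ) : γ ⊕ γ ⊕ Unit := Sum.inr (Sum.inl a)

/-- The extra point `*` of `2Y+1`. -/
def dpStar {γ : Type*} : γ ⊕ γ ⊕ Unit := Sum.inr (Sum.inr ())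

/-- The triples of the Steiner triple system `2Y+1` built from a system `Y` with
triple set `T`. -/
def DoubleTriples {γ : Type*} [Fintype γ] (T : Finset (Finset γ)) :
    Finset (Finset (γ ⊕ γ ⊕ Unit)) :=
  Finset.univ.filter fun t : Finset (γ ⊕ γ ⊕ Unit) =>
    (∃ s ∈ T, t = s.image dp0) ∨
    (∃ a : γ, t = {dpStar, dp0 a, dp1 a}) ∨
    (∃ a b c : γ, ({a, b, c} : Finset γ) ∈ T ∧ t = {dp1 a, dp1 b, dp0 c})

/-- The triples of the direct product of two triple systems. -/
def ProdTriples {α β : Type*} [Fintype α] [Fintype β]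
    (TA : Finset (Finset α)) (TB : Finset (Finset β)) : Finset (Finset (α × β)) :=
  Finset.univ.filter fun t : Finset (α × β) =>
    (∃ a : α, ∃ s ∈ TB, t = s.image fun b => (a, b)) ∨
    (∃ b : β, ∃ s ∈ TA, t = s.image fun a => (a, b)) ∨
    (∃ a₁ a₂ a₃ : α, ∃ b₁ b₂ b₃ : β, ({a₁, a₂, a₃} : Finset α) ∈ TA ∧
      ({b₁, b₂, b₃} : Finset β) ∈ TB ∧ t = {(a₁, b₁), (a₂, b₂), (a₃, b₃)})

/-- The triples of Moore's construction `U = X ∪ (V × A)`.  Here `TX` (on `δ`), `TV`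
(on `α`), `TY` (on `γ`) are the triple sets of `X`, `V`, `Y`; `j : δ → γ` embeds `X`
as a subsystem of `Y` and `ℓ : A → γ` labels `Y − X` by the group `A`. -/
def MooreTriples {δ α γ A : Type*} [Fintype δ] [Fintype α] [Fintype A] [Group A]
    (TX : Finset (Finset δ)) (TV : Finset (Finset α)) (TY : Finset (Finset γ))
    (j : δ → γ) (ℓ : A → γ) : Finset (Finset (δ ⊕ α × A)) :=
  Finset.univ.filter fun t : Finset (δ ⊕ α × A) =>
    (∃ s ∈ TX, t = s.image Sum.inl) ∨
    (∃ v : α, ∃ a₁ a₂ : A, ∃ x : δ, ({ℓ a₁, ℓ a₂, j x} : Finset γ) ∈ TY ∧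
      t = {Sum.inr (v, a₁), Sum.inr (v, a₂), Sum.inl x}) ∨
    (∃ v : α, ∃ a₁ a₂ a₃ : A, ({ℓ a₁, ℓ a₂, ℓ a₃} : Finset γ) ∈ TY ∧
      t = {Sum.inr (v, a₁), Sum.inr (v, a₂), Sum.inr (v, a₃)}) ∨
    (∃ v₁ v₂ v₃ : α, ∃ a₁ a₂ a₃ : A, ({v₁, v₂, v₃} : Finset α) ∈ TV ∧ a₁ * a₂ * a₃ = 1 ∧
      t = {Sum.inr (v₁, a₁), Sum.inr (v₂, a₂), Sum.inr (v₃, a₃)})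

/-- The hypotheses of Moore's construction: `Y` and `V` are Steiner triple systems,
`A` is a cyclic group, `j` embeds `X` as a subsystem of `Y` (with triple set `TX`),
and `ℓ` is a bijective labeling of `Y − X` by `A`. -/
def MooreSetup {δ α γ A : Type*} [Fintype δ] [Group A]
    (TX : Finset (Finset δ)) (TV : Finset (Finset α)) (TY : Finset (Finset γ))
    (j : δ → γ) (ℓ : A → γ) : Prop :=
  IsSTS TY ∧ IsSTS TV ∧ IsCyclic A ∧ Function.Injective j ∧
    IsSub TY (Finset.univ.image j) ∧ IsCopy TX TY j ∧
    Function.Injective ℓ ∧ Set.range ℓ = (Set.range j)ᶜ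

/-- The subsystem `Y_v = X ∪ (v × A)` of Moore's construction. -/
def MooreY {δ α A : Type*} [Fintype δ] [Fintype A] (v : α) : Finset (δ ⊕ α × A) :=
  (Finset.univ.image (Sum.inl : δ → δ ⊕ α × A)) ∪
    Finset.univ.image fun a : A => (Sum.inr (v, a) : δ ⊕ α × A)

/-- A subsystem of type (3.1) of Moore's construction, where `ε` denotes the unique
involution `−1` of `A`: the seven points `x, (v_i, a_i), (v_i, −a_i)` for a triple
`{v₁,v₂,v₃}` of `V`, with `a₁a₂a₃ = 1` and `{a_i, −a_i, x}` a triple of `Y`. -/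
def MooreType31 {δ α γ A : Type*} [Group A] (TV : Finset (Finset α))
    (TY : Finset (Finset γ)) (j : δ → γ) (ℓ : A → γ) (ε : A)
    (W : Finset (δ ⊕ α × A)) : Prop :=
  ∃ v₁ v₂ v₃ : α, ∃ a₁ a₂ a₃ : A, ∃ x : δ,
    ({v₁, v₂, v₃} : Finset α) ∈ TV ∧ a₁ * a₂ * a₃ = 1 ∧
    ({ℓ a₁, ℓ (ε * a₁), j x} : Finset γ) ∈ TY ∧
    ({ℓ a₂, ℓ (ε * a₂), j x} : Finset γ) ∈ TY ∧
    ({ℓ a₃, ℓ (ε * a₃), j x} : Finset γ) ∈ TY ∧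
    W = {Sum.inl x, Sum.inr (v₁, a₁), Sum.inr (v₁, ε * a₁), Sum.inr (v₂, a₂),
         Sum.inr (v₂, ε * a₂), Sum.inr (v₃, a₃), Sum.inr (v₃, ε * a₃)}

/-- The point set of a family of triples. -/
def ptsOf {β : Type*} (T : Finset (Finset β)) : Finset β := T.sup id

/-- Adjacency of triples: two distinct triples of `T` meeting in a point. -/
def TriAdj {β : Type*} (T : Finset (Finset β)) (t s : Finset β) : Prop :=
  t ∈ T ∧ s ∈ T ∧ t ≠ s ∧ (t ∩ s).Nonempty

/-- A partial Steiner triple system is cyclic if the graph whose vertices are its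
triples, two joined when they meet, is a cycle (equivalently: it has at least three
triples, every triple meets exactly two others, and the graph is connected). -/
def IsCyclicPSTS {β : Type*} (T : Finset (Finset β)) : Prop :=
  3 ≤ T.card ∧ (∀ t ∈ T, (T.filter fun s => s ≠ t ∧ (s ∩ t).Nonempty).card = 2) ∧
    ∀ t ∈ T, ∀ s ∈ T, Relation.ReflTransGen (TriAdj T) t s

/-- The partial Steiner triple system `Q(z)` (for the parameter `n`), with triple set
`T`, point set `P` and distinguished point `z`: two cyclic PSTSs `C₁, C₂` on
`2n+4` and `2n+6` points meeting exactly in the point `z`, which lies in two triples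
of each, triples `{z, z'_i, z_i}` of `C_i` with `z'_i` in two triples of `C_i`, and a
new point `z'` in the single additional triple `{z'_1, z', z'_2}`. -/
def IsQ {β : Type*} (n : ℕ) (T : Finset (Finset β)) (P : Finset β) (z : β) : Prop :=
  ∃ C₁ C₂ : Finset (Finset β), ∃ z' z₁' z₂' z₁ z₂ : β,
    IsPSTS T ∧ IsCyclicPSTS C₁ ∧ IsCyclicPSTS C₂ ∧
    (ptsOf C₁).card = 2 * n + 4 ∧ (ptsOf C₂).card = 2 * n + 6 ∧
    ptsOf C₁ ∩ ptsOf C₂ = {z} ∧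
    (C₁.filter fun t => z ∈ t).card = 2 ∧ (C₂.filter fun t => z ∈ t).card = 2 ∧
    ({z, z₁', z₁} : Finset β) ∈ C₁ ∧ (C₁.filter fun t => z₁' ∈ t).card = 2 ∧
    ({z, z₂', z₂} : Finset β) ∈ C₂ ∧ (C₂.filter fun t => z₂' ∈ t).card = 2 ∧
    z' ∉ ptsOf C₁ ∪ ptsOf C₂ ∧
    T = C₁ ∪ C₂ ∪ {({z₁', z', z₂'} : Finset β)} ∧
    P = ptsOf C₁ ∪ ptsOf C₂ ∪ {z'}

/-- Nonempty subsets of `β`: the points of the projective space `P` over `GF(2)`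
built on a point set `β`. -/
abbrev NESet (β : Type*) := {s : Finset β // s.Nonempty}

/-- The triples of the projective space over `GF(2)` on the nonempty subsets of `β`:
3-sets of subsets with empty symmetric difference. -/
def sdTriples (β : Type*) [Fintype β] : Finset (Finset (NESet β)) :=
  Finset.univ.filter fun t : Finset (NESet β) =>
    ∃ a b c : NESet β, a ≠ b ∧ a ≠ c ∧ b ≠ c ∧ t = {a, b, c} ∧
      symmDiff (symmDiff a.1 b.1) c.1 = ∅

/-- The singleton `{a}` as a point of the projective space. -/
def sEl {β : Type*} (a : β) : NESet β := ⟨{a}, Finset.singleton_nonempty a⟩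

/-- The pair `{a,b}` as a point of the projective space. -/
def pEl {β : Type*} (a b : β) : NESet β := ⟨{a, b}, Finset.insert_nonempty a {b}⟩

/-- The triples of `P` removed in Cameron's construction, for each triple `{a,b,c}`
of `V'`. -/
def removedTriples {β : Type*} [Fintype β] (TV' : Finset (Finset β)) :
    Finset (Finset (NESet β)) :=
  Finset.univ.filter fun t : Finset (NESet β) =>
    ∃ a b c : β, ({a, b, c} : Finset β) ∈ TV' ∧
      (t = {pEl a b, pEl a c, pEl b c} ∨ t = {sEl a, sEl b, pEl a b} ∨
       t = {sEl a, sEl c, pEl a c} ∨ t = {sEl b, sEl c, pEl b c})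

/-- The new triples of Cameron's construction, for each triple `{a,b,c}` of `V'`. -/
def addedTriples {β : Type*} [Fintype β] (TV' : Finset (Finset β)) :
    Finset (Finset (NESet β)) :=
  Finset.univ.filter fun t : Finset (NESet β) =>
    ∃ a b c : β, ({a, b, c} : Finset β) ∈ TV' ∧
      (t = {sEl a, sEl b, sEl c} ∨ t = {sEl a, pEl a b, pEl a c} ∨
       t = {sEl b, pEl a b, pEl b c} ∨ t = {sEl c, pEl a c, pEl b c})

/-- The Steiner triple system `U` of Cameron's construction obtained from the
projective space `P` and the partial system `V'`. -/
def CameronSTS {β : Type*} [Fintype β] (TV' : Finset (Finset β)) :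
    Finset (Finset (NESet β)) :=
  (sdTriples β \ removedTriples TV') ∪ addedTriples TV'

/-- A Steiner quasigroup: the algebraic form of a Steiner triple system, in which the
product of two distinct points is the third point of their triple. -/
structure SteinerOp (α : Type*) where
  op : α → α → α
  idem : ∀ a, op a a = a
  comm : ∀ a b, op a b = op b a
  cancel : ∀ a b, op a (op a b) = b

namespace SteinerOp

/-- A permutation preserving the product of a Steiner quasigroup. -/
def IsHom {α : Type*} (S : SteinerOp α) (g : Equiv.Perm α) : Prop :=
  ∀ a b, g (S.op a b) = S.op (g a) (g b)

/-- The triples of the Steiner triple system of a Steiner quasigroup. -/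
def triples {α : Type*} [Fintype α] (S : SteinerOp α) : Finset (Finset α) :=
  Finset.univ.filter fun t => ∃ a b, a ≠ b ∧ t = {a, b, S.op a b}

/-- Transport of a Steiner quasigroup along a bijection. -/
def map {α β : Type*} (S : SteinerOp α) (e : α ≃ β) : SteinerOp β where
  op a b := e (S.op (e.symm a) (e.symm b))
  idem a := by simp [S.idem]
  comm a b := by rw [S.comm]
  cancel a b := by simp [S.cancel]

theorem op_ne_left {α : Type*} (S : SteinerOp α) {a b : α} (h : a ≠ b) : S.op a b ≠ a := by
  intro h'
  apply h
  have := S.cancel a b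
  rw [h', S.idem] at this
  exact this

theorem op_ne_right {α : Type*} (S : SteinerOp α) {a b : α} (h : a ≠ b) : S.op a b ≠ b := by
  rw [S.comm]
  exact S.op_ne_left h.symm

theorem mem_triples {α : Type*} [Fintype α] (S : SteinerOp α) {t : Finset α} :
    t ∈ S.triples ↔ ∃ a b, a ≠ b ∧ t = {a, b, S.op a b} := by
  simp [triples]

theorem eq_of_mem_triples {α : Type*} [Fintype α] (S : SteinerOp α) {t : Finset α}
    (ht : t ∈ S.triples) {p q : α} (hp : p ∈ t) (hq : q ∈ t) (hpq : p ≠ q) :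
    t = {p, q, S.op p q} := by
  obtain ⟨a, b, hab, rfl⟩ := S.mem_triples.1 ht
  have h1 : S.op a (S.op a b) = b := S.cancel a b
  have h2 : S.op b (S.op a b) = a := by rw [S.comm a b, S.cancel]
  have h3 : S.op (S.op a b) a = b := by rw [S.comm, h1]
  have h4 : S.op (S.op a b) b = a := by rw [S.comm, h2]
  have h5 := S.comm b a
  simp only [Finset.mem_insert, Finset.mem_singleton] at hp hq
  ext z
  simp only [Finset.mem_insert, Finset.mem_singleton]
  rcases hp with rfl | rfl | rfl <;> rcases hq with rfl | rfl | rfl <;> grind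

theorem card_of_mem_triples {α : Type*} [Fintype α] (S : SteinerOp α) {t : Finset α}
    (ht : t ∈ S.triples) : t.card = 3 := by
  obtain ⟨a, b, hab, rfl⟩ := S.mem_triples.1 ht
  exact Finset.card_eq_three.2 ⟨a, b, S.op a b, hab, (S.op_ne_left hab).symm,
    (S.op_ne_right hab).symm, rfl⟩

theorem isSTS_triples {α : Type*} [Fintype α] (S : SteinerOp α) : IsSTS S.triples := by
  refine ⟨fun t ht => S.card_of_mem_triples ht, fun p q hpq => ⟨{p, q, S.op p q}, ?_, ?_⟩⟩
  · exact ⟨S.mem_triples.2 ⟨p, q, hpq, rfl⟩, by simp, by simp⟩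
  · rintro t ⟨ht, hp, hq⟩
    exact S.eq_of_mem_triples ht hp hq hpq

theorem isAut_triples_iff {α : Type*} [Fintype α] (S : SteinerOp α) (g : Equiv.Perm α) :
    IsAut S.triples g ↔ S.IsHom g := by
  constructor
  · intro h a b
    by_cases hab : a = b
    · rw [hab, S.idem, S.idem]
    have h1 := (h {a, b, S.op a b}).1 (S.mem_triples.2 ⟨a, b, hab, rfl⟩)
    have hg : g a ≠ g b := fun h' => hab (g.injective h')
    have h2 := S.eq_of_mem_triples h1 (p := g a) (q := g b) (by simp) (by simp) hg
    have h3 : g (S.op a b) ∈ ({g a, g b, S.op (g a) (g b)} : Finset α) := by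
      rw [← h2]
      simp
    simp only [Finset.mem_insert, Finset.mem_singleton, g.injective.eq_iff] at h3
    rcases h3 with h3 | h3 | h3
    · exact absurd h3 (S.op_ne_left hab)
    · exact absurd h3 (S.op_ne_right hab)
    · exact h3
  · intro h t
    constructor
    · intro ht
      obtain ⟨a, b, hab, rfl⟩ := S.mem_triples.1 ht
      refine S.mem_triples.2 ⟨g a, g b, fun h' => hab (g.injective h'), ?_⟩
      simp [Finset.image_insert, h a b]
    · intro ht
      obtain ⟨a, b, hab, hE⟩ := S.mem_triples.1 ht
      refine S.mem_triples.2 ⟨g.symm a, g.symm b, fun h' => hab (g.symm.injective h'), ?_⟩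
      have h4 : S.op (g.symm a) (g.symm b) = g.symm (S.op a b) := by
        apply g.injective
        rw [h]
        simp
      have h5 : t = (t.image g).image g.symm := by
        rw [Finset.image_image]
        simp
      rw [h5, hE, h4]
      simp [Finset.image_insert]

theorem exists_triples_eq {α : Type*} [Fintype α] {T : Finset (Finset α)} (hT : IsSTS T) :
    ∃ S : SteinerOp α, S.triples = T := by
  have key : ∀ a b : α, ∃ c : α, (a = b → c = a) ∧
      (a ≠ b → c ≠ a ∧ c ≠ b ∧ ({a, b, c} : Finset α) ∈ T) := by
    intro a b
    by_cases hab : a = b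
    · exact ⟨a, fun _ => rfl, fun h => absurd hab h⟩
    obtain ⟨t, ⟨ht, ha, hb⟩, -⟩ := hT.2 a b hab
    have h3 := hT.1 t ht
    have hb' : b ∈ t.erase a := Finset.mem_erase.2 ⟨Ne.symm hab, hb⟩
    have h1 : ((t.erase a).erase b).card = 1 := by
      rw [Finset.card_erase_of_mem hb', Finset.card_erase_of_mem ha, h3]
    obtain ⟨c, hc⟩ := Finset.card_eq_one.1 h1
    have hcm : c ∈ (t.erase a).erase b := by rw [hc]; simp
    simp only [Finset.mem_erase] at hcm
    refine ⟨c, fun h => absurd h hab, fun _ => ⟨hcm.2.1, hcm.1, ?_⟩⟩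
    have : t = {a, b, c} := by
      rw [← Finset.insert_erase ha, ← Finset.insert_erase hb', hc]
    rwa [← this]
  choose f hf1 hf2 using key
  have uniq : ∀ a b c : α, a ≠ b → c ≠ a → c ≠ b → ({a, b, c} : Finset α) ∈ T →
      f a b = c := by
    intro a b c hab hca hcb hc
    have h := hf2 a b hab
    have h' := (hT.2 a b hab).unique ⟨h.2.2, by simp, by simp⟩ ⟨hc, by simp, by simp⟩
    have h2 : f a b ∈ ({a, b, c} : Finset α) := by
      rw [← h']
      simp
    simp only [Finset.mem_insert, Finset.mem_singleton] at h2
    rcases h2 with h2 | h2 | h2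
    · exact absurd h2 h.1
    · exact absurd h2 h.2.1
    · exact h2
  have hcomm : ∀ a b, f a b = f b a := by
    intro a b
    by_cases hab : a = b
    · rw [hab]
    have h := hf2 b a (Ne.symm hab)
    exact uniq a b _ hab h.2.1 h.1 (by rw [Finset.insert_comm]; exact h.2.2)
  have hcancel : ∀ a b, f a (f a b) = b := by
    intro a b
    by_cases hab : a = b
    · rw [hf1 a b hab, hf1 a a rfl, hab]
    have h := hf2 a b hab
    refine uniq a _ b h.1.symm (Ne.symm hab) h.2.1.symm ?_
    rw [show ({a, f a b, b} : Finset α) = {a, b, f a b} by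
      rw [Finset.pair_comm]]
    exact h.2.2
  refine ⟨⟨f, fun a => hf1 a a rfl, hcomm, hcancel⟩, ?_⟩
  ext t
  rw [mem_triples]
  constructor
  · rintro ⟨a, b, hab, rfl⟩
    exact (hf2 a b hab).2.2
  · intro ht
    obtain ⟨a, b, c, hab, hac, hbc, rfl⟩ := Finset.card_eq_three.1 (hT.1 t ht)
    refine ⟨a, b, hab, ?_⟩
    have h := uniq a b c hab hac.symm hbc.symm ht
    change ({a, b, c} : Finset α) = {a, b, f a b}
    rw [h]

/-- The properties of an embedding of Steiner quasigroups that make the associated embedding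
of Steiner triple systems full. -/
structure IsFullHom {α β : Type*} (S : SteinerOp α) (U : SteinerOp β) (φ : α → β) : Prop where
  injective : Function.Injective φ
  map_op : ∀ a b, φ (S.op a b) = U.op (φ a) (φ b)
  restrict : ∀ g, U.IsHom g → ∃ h, S.IsHom h ∧ ∀ x, g (φ x) = φ (h x)
  extend : ∀ h, S.IsHom h → ∃! g : Equiv.Perm β, U.IsHom g ∧ ∀ x, g (φ x) = φ (h x)

theorem IsFullHom.fullEmbedding {α β : Type*} [Fintype α] [Fintype β] {S : SteinerOp α}
    {U : SteinerOp β} {φ : α → β} (H : S.IsFullHom U φ) :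
    FullEmbedding S.triples U.triples φ := by
  obtain ⟨hφ, hop, hres, hext⟩ := H
  refine ⟨⟨hφ, ?_, ?_⟩, ?_, ?_, ?_⟩
  · intro s hs
    obtain ⟨a, b, hab, rfl⟩ := S.mem_triples.1 hs
    refine U.mem_triples.2 ⟨φ a, φ b, fun h => hab (hφ h), ?_⟩
    simp [Finset.image_insert, hop]
  · intro t ht hsub
    obtain ⟨p, q, hpq, rfl⟩ := U.mem_triples.1 ht
    obtain ⟨a, -, rfl⟩ := Finset.mem_image.1 (hsub (by simp : p ∈ _))
    obtain ⟨b, -, rfl⟩ := Finset.mem_image.1 (hsub (by simp : q ∈ _))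
    refine ⟨{a, b, S.op a b}, S.mem_triples.2 ⟨a, b, fun h => hpq (by rw [h]), rfl⟩, ?_⟩
    simp [Finset.image_insert, hop]
  · intro g hg
    obtain ⟨h, -, hh⟩ := hres g ((U.isAut_triples_iff g).1 hg)
    rw [Finset.image_image]
    ext z
    simp only [Finset.mem_image, Finset.mem_univ, true_and, Function.comp_apply, hh]
    exact ⟨fun ⟨a, ha⟩ => ⟨h a, ha⟩, fun ⟨a, ha⟩ => ⟨h.symm a, by simpa using ha⟩⟩
  · intro g hg
    obtain ⟨h, hh, hx⟩ := hres g ((U.isAut_triples_iff g).1 hg)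
    exact ⟨h, (S.isAut_triples_iff h).2 hh, hx⟩
  · intro h hh
    simpa only [isAut_triples_iff] using hext h ((S.isAut_triples_iff h).1 hh)

end SteinerOp

/-- A Steiner triple system on `X ⊕ A` with a hole `X`: every pair of points not contained
in `X` lies in a unique triple. Here `join p q` is the third point of the triple of
`p, q ∈ A`, and `partner x p` that of the triple of `x ∈ X` and `p ∈ A`. -/
structure HoledSystem (X A : Type*) where
  join : A → A → X ⊕ A
  partner : X → A → A
  join_comm : ∀ p q, join p q = join q p
  join_block : ∀ p q r, p ≠ q → join p q = Sum.inr r → r ≠ p ∧ join p r = Sum.inr q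
  partner_ne : ∀ x p, partner x p ≠ p
  join_partner : ∀ x p, join p (partner x p) = Sum.inl x
  eq_partner : ∀ p q x, p ≠ q → join p q = Sum.inl x → q = partner x p

namespace HoledSystem

theorem partner_partner {X A : Type*} (E : HoledSystem X A) (x : X) (p : A) :
    E.partner x (E.partner x p) = p :=
  (E.eq_partner _ _ _ (E.partner_ne x p) (by rw [E.join_comm, E.join_partner])).symm

theorem partner_injective {X A : Type*} (E : HoledSystem X A) (p : A) :
    Function.Injective fun x => E.partner x p := by
  intro x y h
  have h1 := E.join_partner x p
  simp only at h
  rw [h, E.join_partner] at h1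
  exact (Sum.inl_injective h1).symm

/-- Relabelling of the points outside the hole. -/
def map {X A B : Type*} (E : HoledSystem X A) (e : A ≃ B) : HoledSystem X B where
  join p q := Sum.map id e (E.join (e.symm p) (e.symm q))
  partner x p := e (E.partner x (e.symm p))
  join_comm p q := by rw [E.join_comm]
  join_block p q r hpq h := by
    rcases h1 : E.join (e.symm p) (e.symm q) with x | s
    · simp [h1] at h
    · simp only [h1, Sum.map_inr, Sum.inr.injEq] at h
      have := E.join_block _ _ _ (by simpa using hpq) h1
      subst h
      refine ⟨fun h => this.1 (by simp [← h]), ?_⟩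
      simp [this.2]
  partner_ne x p h := E.partner_ne x (e.symm p) (by rw [Equiv.eq_symm_apply]; exact h)
  join_partner x p := by simp [E.join_partner]
  eq_partner p q x hpq h := by
    rcases h1 : E.join (e.symm p) (e.symm q) with y | s
    · simp only [h1, Sum.map_inl, id, Sum.inl.injEq] at h
      rw [← h, ← E.eq_partner _ _ _ (by simpa using hpq) h1, e.apply_symm_apply]
    · simp [h1] at h

/-- Relabelling of the hole. -/
def mapHole {X Y A : Type*} (E : HoledSystem X A) (e : X ≃ Y) : HoledSystem Y A where
  join p q := Sum.map e id (E.join p q)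
  partner y p := E.partner (e.symm y) p
  join_comm p q := by rw [E.join_comm]
  join_block p q r hpq h := by
    rcases h1 : E.join p q with x | s
    · simp [h1] at h
    · simp only [h1, Sum.map_inr, id, Sum.inr.injEq] at h
      subst h
      have := E.join_block _ _ _ hpq h1
      exact ⟨this.1, by simp [this.2]⟩
  partner_ne x p := E.partner_ne _ p
  join_partner x p := by simp [E.join_partner]
  eq_partner p q x hpq h := by
    rcases h1 : E.join p q with y | s
    · simp only [h1, Sum.map_inl, Sum.inl.injEq] at h
      rw [← h, e.symm_apply_apply]
      exact E.eq_partner _ _ _ hpq h1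
    · simp [h1] at h

/-- The product on `X ⊕ A` obtained by filling the hole with a Steiner quasigroup. -/
def fillOp {X A : Type*} (E : HoledSystem X A) (S : SteinerOp X) : X ⊕ A → X ⊕ A → X ⊕ A
  | Sum.inl x, Sum.inl y => Sum.inl (S.op x y)
  | Sum.inl x, Sum.inr p => Sum.inr (E.partner x p)
  | Sum.inr p, Sum.inl x => Sum.inr (E.partner x p)
  | Sum.inr p, Sum.inr q => if p = q then Sum.inr p else E.join p q

/-- The Steiner quasigroup obtained by filling the hole. -/
def toSteinerOp {X A : Type*} (E : HoledSystem X A) (S : SteinerOp X) :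
    SteinerOp (X ⊕ A) where
  op := E.fillOp S
  idem := by rintro (x | p) <;> simp [fillOp, S.idem]
  comm := by
    rintro (x | p) (y | q) <;> simp only [fillOp]
    · rw [S.comm]
    · by_cases h : p = q
      · simp [h]
      · simp [h, Ne.symm h, E.join_comm p q]
  cancel := by
    rintro (x | p) (y | q) <;> simp only [fillOp]
    · rw [S.cancel]
    · rw [E.partner_partner]
    · rw [if_neg (E.partner_ne y p).symm, E.join_partner]
    · by_cases h : p = q
      · simp [h]
      · rw [if_neg h]
        rcases h1 : E.join p q with x | r
        · simp only
          rw [← E.eq_partner p q x h h1]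
        · have := E.join_block _ _ _ h h1
          simp [this.1.symm, this.2]

theorem toSteinerOp_inr_inr {X A : Type*} (E : HoledSystem X A) (S : SteinerOp X) {p q : A}
    (h : p ≠ q) : (E.toSteinerOp S).op (Sum.inr p) (Sum.inr q) = E.join p q :=
  if_neg h

end HoledSystem

/-- A group divisible design of triples on `Q × T` with the fibres over `Q` as groups. -/
structure GroupDivisible (Q T : Type*) where
  op : Q × T → Q × T → Q × T
  comm : ∀ p q, p.1 ≠ q.1 → op p q = op q p
  fst_ne : ∀ p q, p.1 ≠ q.1 → (op p q).1 ≠ p.1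
  cancel : ∀ p q, p.1 ≠ q.1 → op p (op p q) = q

namespace GroupDivisible

/-- Filling the groups of a group divisible design with copies of a holed system,
all with the same hole. -/
def fill {X Q T : Type*} (D : GroupDivisible Q T) (E : HoledSystem X T) :
    HoledSystem X (Q × T) where
  join p q := if p.1 = q.1 then Sum.map id (Prod.mk p.1) (E.join p.2 q.2)
    else Sum.inr (D.op p q)
  partner x p := (p.1, E.partner x p.2)
  join_comm p q := by
    by_cases h : p.1 = q.1
    · simp [h, E.join_comm p.2 q.2]
    · simp [h, Ne.symm h, D.comm p q h]
  join_block p q r hpq h := by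
    by_cases h0 : p.1 = q.1
    · rw [if_pos h0] at h
      have h2 : p.2 ≠ q.2 := fun h' => hpq (Prod.ext h0 h')
      rcases h1 : E.join p.2 q.2 with x | s
      · simp [h1] at h
      · simp only [h1, Sum.map_inr, Sum.inr.injEq] at h
        subst h
        have := E.join_block _ _ _ h2 h1
        refine ⟨fun h => this.1 (by rw [← h]), ?_⟩
        simp only [if_true, this.2, Sum.map_inr]
        rw [h0]
    · rw [if_neg h0] at h
      have := Sum.inr_injective h
      subst this
      refine ⟨fun h => D.fst_ne p q h0 (by rw [h]), ?_⟩
      rw [if_neg (D.fst_ne p q h0).symm, D.cancel p q h0]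
  partner_ne x p h := E.partner_ne x p.2 (congrArg Prod.snd h)
  join_partner x p := by simp [E.join_partner]
  eq_partner p q x hpq h := by
    by_cases h0 : p.1 = q.1
    · rw [if_pos h0] at h
      have h2 : p.2 ≠ q.2 := fun h' => hpq (Prod.ext h0 h')
      rcases h1 : E.join p.2 q.2 with y | s
      · simp only [h1, Sum.map_inl, id, Sum.inl.injEq] at h
        subst h
        rw [← E.eq_partner _ _ _ h2 h1, h0]
      · simp [h1] at h
    · simp [h0] at h

end GroupDivisible

/-- The group divisible design on `V × A` whose triples `(v₁, a₁), (v₂, a₂), (v₃, a₃)` lie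
over the triples of `V` and satisfy `a₁ + a₂ + a₃ = 0`. -/
def SteinerOp.zeroSumDesign {V : Type*} (S : SteinerOp V) (A : Type*) [AddCommGroup A] :
    GroupDivisible V A where
  op p q := (S.op p.1 q.1, -p.2 - q.2)
  comm p q _ := by
    rw [S.comm]
    congr 1
    abel
  fst_ne p q h := S.op_ne_left h
  cancel p q _ := by
    ext
    · exact S.cancel _ _
    · dsimp only
      abel

/-- Moore's construction: the fibres over `V` are filled with copies of a holed system,
and the hole with a Steiner quasigroup. -/
def SteinerOp.moore {V X A : Type*} [AddCommGroup A] (S : SteinerOp V)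
    (E : HoledSystem X A) (SX : SteinerOp X) : SteinerOp (X ⊕ V × A) :=
  ((S.zeroSumDesign A).fill E).toSteinerOp SX

namespace SteinerOp

section Fibres

variable {V X A : Type*}

/-- The part of the point set `W` in the hole. -/
def holePart [Fintype X] (W : Finset (X ⊕ V × A)) : Finset X :=
  Finset.univ.filter fun x => Sum.inl x ∈ W

/-- The fibre of the point set `W` over the point `v`. -/
def fibre [Fintype A] (W : Finset (X ⊕ V × A)) (v : V) : Finset A :=
  Finset.univ.filter fun a => Sum.inr (v, a) ∈ W

theorem mem_fibre [Fintype A] {W : Finset (X ⊕ V × A)} {v : V} {a : A} :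
    a ∈ fibre W v ↔ Sum.inr (v, a) ∈ W := by
  simp [fibre]

theorem card_eq_sum_fibre [Fintype A] [Fintype V] [Fintype X] (W : Finset (X ⊕ V × A)) :
    W.card = (holePart W).card + ∑ v, (fibre W v).card := by
  have h1 : W.card = ∑ p, if p ∈ W then 1 else 0 := by simp
  rw [h1, Fintype.sum_sum_type, Fintype.sum_prod_type]
  simp [fibre, holePart]

end Fibres

section Moore

variable {V X A : Type*} [AddCommGroup A] (S : SteinerOp V) (E : HoledSystem X A)
  (SX : SteinerOp X)

theorem moore_inl_inr (x : X) (v : V) (a : A) :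
    (S.moore E SX).op (Sum.inl x) (Sum.inr (v, a)) = Sum.inr (v, E.partner x a) := rfl

theorem moore_of_ne {v w : V} (h : v ≠ w) (a b : A) :
    (S.moore E SX).op (Sum.inr (v, a)) (Sum.inr (w, b)) = Sum.inr (S.op v w, -a - b) := by
  have h' : ((v, a) : V × A) ≠ (w, b) := fun h' => h (congrArg Prod.fst h')
  refine (HoledSystem.toSteinerOp_inr_inr _ _ h').trans ?_
  simp [GroupDivisible.fill, zeroSumDesign, h]

theorem moore_of_eq (v : V) {a b : A} (h : a ≠ b) :
    (S.moore E SX).op (Sum.inr (v, a)) (Sum.inr (v, b)) =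
      Sum.map id (Prod.mk v) (E.join a b) := by
  have h' : ((v, a) : V × A) ≠ (v, b) := fun h' => h (congrArg Prod.snd h')
  refine (HoledSystem.toSteinerOp_inr_inr _ _ h').trans ?_
  simp [GroupDivisible.fill]

variable {S E SX}

theorem isHom_moore_of_isHom {h : Equiv.Perm V} (hh : S.IsHom h) :
    (S.moore E SX).IsHom (Equiv.sumCongr (Equiv.refl X) (Equiv.prodCongr h (Equiv.refl A))) := by
  rintro (x | ⟨v, a⟩) (y | ⟨w, b⟩)
  · rfl
  · rfl
  · rfl
  · by_cases hvw : v = w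
    · subst hvw
      by_cases hab : a = b
      · rw [hab, idem, idem]
      · simp only [moore_of_eq S E SX v hab, Equiv.sumCongr_apply, Sum.map_inr,
          Equiv.prodCongr_apply, Prod.map_apply, Equiv.refl_apply, moore_of_eq S E SX (h v) hab]
        rcases E.join a b with x | c <;> rfl
    · simp only [moore_of_ne S E SX hvw, Equiv.sumCongr_apply, Sum.map_inr,
        Equiv.prodCongr_apply, Prod.map_apply, Equiv.refl_apply,
        moore_of_ne S E SX (h.injective.ne hvw), hh v w]

theorem neg_sub_mem_fibre [Fintype A] {W : Finset (X ⊕ V × A)}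
    (hW : ∀ p ∈ W, ∀ q ∈ W, (S.moore E SX).op p q ∈ W) {v w : V} (hvw : v ≠ w) {a b : A}
    (ha : a ∈ fibre W v) (hb : b ∈ fibre W w) : -a - b ∈ fibre W (S.op v w) := by
  rw [mem_fibre] at *
  rw [← S.moore_of_ne E SX hvw]
  exact hW _ ha _ hb

theorem card_fibre_le [Fintype A] {W : Finset (X ⊕ V × A)}
    (hW : ∀ p ∈ W, ∀ q ∈ W, (S.moore E SX).op p q ∈ W) {v w : V} (hvw : v ≠ w)
    (hw : (fibre W w).Nonempty) : (fibre W v).card ≤ (fibre W (S.op v w)).card := by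
  obtain ⟨b, hb⟩ := hw
  refine Finset.card_le_card_of_injOn (fun a => -a - b)
    (fun a ha => neg_sub_mem_fibre hW hvw ha hb) ?_
  intro a _ a' _ h
  simpa using h

theorem card_fibre_eq [Fintype A] {W : Finset (X ⊕ V × A)}
    (hW : ∀ p ∈ W, ∀ q ∈ W, (S.moore E SX).op p q ∈ W) {v w : V}
    (hv : (fibre W v).Nonempty) (hw : (fibre W w).Nonempty) :
    (fibre W v).card = (fibre W w).card := by
  suffices H : ∀ v w : V, (fibre W v).Nonempty → (fibre W w).Nonempty → v ≠ w →
      (fibre W v).card ≤ (fibre W w).card by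
    by_cases hvw : v = w
    · rw [hvw]
    · exact le_antisymm (H v w hv hw hvw) (H w v hw hv (Ne.symm hvw))
  intro v w hv hw hvw
  refine (card_fibre_le hW hvw hw).trans ?_
  have h1 := card_fibre_le hW (S.op_ne_left hvw) hv
  rwa [S.comm _ v, S.cancel] at h1

/-- The stabilizer of a fibre under translations. -/
def fibreStabilizer [Fintype A] (W : Finset (X ⊕ V × A)) (v : V) : AddSubgroup A where
  carrier := {h | ∀ b, b ∈ fibre W v ↔ b + h ∈ fibre W v}
  zero_mem' := by simp
  add_mem' {h h'} H H' b := by rw [H b, H' (b + h), add_assoc]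
  neg_mem' {h} H b := by
    rw [H (b + -h)]
    simp

theorem sub_mem_fibreStabilizer [Fintype A] {W : Finset (X ⊕ V × A)}
    (hW : ∀ p ∈ W, ∀ q ∈ W, (S.moore E SX).op p q ∈ W) {v w : V} (hvw : v ≠ w) {a a' : A}
    (ha : a ∈ fibre W v) (ha' : a' ∈ fibre W v) : a - a' ∈ fibreStabilizer W w := by
  have key : ∀ a ∈ fibre W v, ∀ a' ∈ fibre W v, ∀ b ∈ fibre W w,
      b + (a - a') ∈ fibre W w := by
    intro a ha a' ha' b hb
    have h1 := neg_sub_mem_fibre hW hvw ha hb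
    have h2 := neg_sub_mem_fibre hW (S.op_ne_left hvw) h1 ha'
    rw [S.comm _ v, S.cancel] at h2
    convert h2 using 1
    abel
  intro b
  refine ⟨key a ha a' ha' b, fun h => ?_⟩
  have := key a' ha' a ha _ h
  convert this using 1
  abel

theorem card_fibreStabilizer [Fintype A] {W : Finset (X ⊕ V × A)}
    (hW : ∀ p ∈ W, ∀ q ∈ W, (S.moore E SX).op p q ∈ W) {v w : V} (hvw : v ≠ w)
    (hv : (fibre W v).Nonempty) (hw : (fibre W w).Nonempty) :
    Nat.card (fibreStabilizer W w) = (fibre W v).card := by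
  have h0 : Nat.card (fibreStabilizer W w) =
      (Finset.univ.filter fun h => h ∈ fibreStabilizer W w).card := by
    rw [Nat.card_eq_fintype_card, Fintype.card_subtype]
  rw [h0]
  apply le_antisymm
  · rw [card_fibre_eq hW hv hw]
    obtain ⟨b, hb⟩ := hw
    refine Finset.card_le_card_of_injOn (fun h => b + h) ?_ (fun a _ a' _ h => by simpa using h)
    intro h hh
    simp only [Finset.coe_filter, Finset.mem_univ, true_and, Set.mem_ofPred_eq] at hh
    exact (hh b).1 hb
  · obtain ⟨c, hc⟩ := hv
    refine Finset.card_le_card_of_injOn (fun a => a - c) ?_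
      (fun a _ c _ h => by simpa using h)
    intro a ha
    simpa using sub_mem_fibreStabilizer hW hvw ha hc

/-- A large closed set of points of Moore's construction lies over a single point of `V`. -/
theorem exists_fibre_of_closed {n : ℕ} [NeZero n] [Fintype V] [Fintype X]
    {E : HoledSystem X (ZMod n)} {x₀ : X} {B : Finset (ZMod n)} (hB : B.card ≤ 6)
    (hpart : ∀ a ∉ B, E.partner x₀ a - a = 1 ∨ E.partner x₀ a - a = -1)
    (hn : Fintype.card V * Fintype.card X < n) (hn' : 6 * Fintype.card V < n)
    {W : Finset (X ⊕ V × ZMod n)} (hW : ∀ p ∈ W, ∀ q ∈ W, (S.moore E SX).op p q ∈ W)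
    (hcard : W.card = Fintype.card X + n) :
    ∃ v, ∀ w a, Sum.inr (w, a) ∈ W → w = v := by
  have hsum := card_eq_sum_fibre W
  set P := Finset.univ.filter fun v => (fibre W v).Nonempty with hP
  have hxle : (holePart W).card ≤ Fintype.card X := Finset.card_le_univ _
  set x' := (holePart W).card with hx'
  have hn0 : 0 < n := NeZero.pos n
  have hne : ∃ v, (fibre W v).Nonempty := by
    by_contra hcon
    push Not at hcon
    rw [Finset.sum_eq_zero (fun v _ => by rw [hcon v, Finset.card_empty])] at hsum
    omega
  obtain ⟨v, hv⟩ := hne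
  refine ⟨v, ?_⟩
  by_contra hcon
  push Not at hcon
  obtain ⟨w, a, ha, hwv⟩ := hcon
  have hw : (fibre W w).Nonempty := ⟨a, mem_fibre.2 ha⟩
  set m := (fibre W v).card with hm
  have hsum2 : ∑ u, (fibre W u).card = P.card * m := by
    rw [← Finset.sum_subset (Finset.subset_univ P), Finset.sum_const_nat]
    · intro u hu
      exact card_fibre_eq hW (Finset.mem_filter.1 hu).2 hv
    · intro u _ hu
      simp only [hP, Finset.mem_filter, Finset.mem_univ, true_and,
        Finset.not_nonempty_iff_eq_empty] at hu
      rw [hu, Finset.card_empty]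
  have hk2 : 2 ≤ P.card := by
    refine Finset.one_lt_card.2 ⟨v, ?_, w, ?_, Ne.symm hwv⟩ <;> simp [hP, hv, hw]
  have hkV : P.card ≤ Fintype.card V := Finset.card_le_univ _
  have hH := card_fibreStabilizer hW (Ne.symm hwv) hv hw
  have hdvd : m ∣ n := by
    have := AddSubgroup.card_addSubgroup_dvd_card (fibreStabilizer W w)
    rwa [hH, Nat.card_zmod] at this
  have hm0 : 0 < m := hv.card_pos
  have heq : Fintype.card X + n = x' + P.card * m := by rw [← hcard, hsum, hsum2]
  have hxeq : x' = Fintype.card X := by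
    by_contra hne
    have h1 : m ∣ Fintype.card X - x' := by
      obtain ⟨d, hd⟩ := hdvd
      have : Fintype.card X - x' + m * d = m * P.card := by
        rw [mul_comm m P.card]
        omega
      exact (Nat.dvd_add_left ⟨d, rfl⟩).1 ⟨_, this⟩
    have h2 : m ≤ Fintype.card X := (Nat.le_of_dvd (by omega) h1).trans (Nat.sub_le _ _)
    have h3 : P.card * m ≤ Fintype.card V * Fintype.card X := Nat.mul_le_mul hkV h2
    omega
  have hnk : n = P.card * m := by omega
  have hX : Sum.inl x₀ ∈ W := by
    have := Finset.eq_univ_of_card _ hxeq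
    have h1 : x₀ ∈ holePart W := by simp [this]
    simpa [holePart] using h1
  have hFB : fibre W v ⊆ B := by
    intro b hb
    by_contra hbB
    have h1 : E.partner x₀ b ∈ fibre W v := by
      rw [mem_fibre] at *
      exact hW _ hX _ hb
    have h2 := sub_mem_fibreStabilizer hW (Ne.symm hwv) h1 hb
    have h3 : (1 : ZMod n) ∈ fibreStabilizer W w := by
      rcases hpart b hbB with h | h <;> rw [h] at h2
      · exact h2
      · simpa using neg_mem h2
    have h4 : fibreStabilizer W w = ⊤ := by
      rw [AddSubgroup.eq_top_iff']
      intro z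
      have := nsmul_mem h3 z.val
      simpa using this
    rw [h4] at hH
    have h5 : n = m := by
      rw [hm, ← hH, AddSubgroup.card_top, Nat.card_zmod]
    rw [← h5] at hnk
    nlinarith
  have h6 : m ≤ 6 := (Finset.card_le_card hFB).trans hB
  have h7 : P.card * m ≤ Fintype.card V * 6 := Nat.mul_le_mul hkV h6
  omega

end Moore

end SteinerOp

/-- The parity of an integer modulo an even number. -/
def ZMod.parity {n : ℕ} (hn : 2 ∣ n) : ZMod n →+* ZMod 2 := ZMod.castHom hn (ZMod 2)

/-- The underlying involution of `ℕ` of the twisted matching. -/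
def twistedSwap (k : ℕ) : ℕ :=
  if k = 0 then 5 else if k = 5 then 0 else if k = 1 then 2 else if k = 2 then 1
  else if k = 4 then 7 else if k = 7 then 4 else if k = 3 then 6 else if k = 6 then 3
  else if k % 2 = 0 then k + 1 else k - 1

/-- A perfect matching of `ZMod n`, `n` even, joining points of different parity and
commuting with no nontrivial affine bijection. -/
def twistedMatching {n : ℕ} (z : ZMod n) : ZMod n := twistedSwap z.val

section TwistedMatching

theorem twistedSwap_of_le {k : ℕ} (hk : 8 ≤ k) :
    twistedSwap k = if k % 2 = 0 then k + 1 else k - 1 := by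
  unfold twistedSwap
  split_ifs <;> omega

theorem twistedSwap_twistedSwap (k : ℕ) : twistedSwap (twistedSwap k) = k := by
  by_cases hk : k < 8
  · interval_cases k <;> rfl
  · rw [twistedSwap_of_le (not_lt.1 hk)]
    split_ifs with h <;> rw [twistedSwap_of_le (by omega)] <;> split_ifs <;> omega

theorem twistedSwap_cases (k : ℕ) :
    (k = 0 ∧ twistedSwap k = k + 5) ∨ (k = 5 ∧ k = twistedSwap k + 5) ∨
    ((k = 4 ∨ k = 3) ∧ twistedSwap k = k + 3) ∨
    ((k = 7 ∨ k = 6) ∧ k = twistedSwap k + 3) ∨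
    twistedSwap k = k + 1 ∨ k = twistedSwap k + 1 := by
  unfold twistedSwap
  split_ifs <;> omega

theorem twistedSwap_lt {n k : ℕ} (hn : 2 ∣ n) (hn' : 20 < n) (hk : k < n) :
    twistedSwap k < n := by
  unfold twistedSwap
  split_ifs <;> omega

variable {n : ℕ}

theorem ZMod.natCast_injOn {j k : ℕ} (hj : j < n) (hk : k < n)
    (h : (j : ZMod n) = k) : j = k := by
  rw [ZMod.natCast_eq_natCast_iff'] at h
  rwa [Nat.mod_eq_of_lt hj, Nat.mod_eq_of_lt hk] at h

theorem twistedMatching_natCast {k : ℕ} (hk : k < n) :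
    twistedMatching (k : ZMod n) = twistedSwap k := by
  rw [twistedMatching, ZMod.val_natCast_of_lt hk]

theorem twistedMatching_twistedMatching [NeZero n] (hn : 2 ∣ n) (hn' : 20 < n)
    (z : ZMod n) : twistedMatching (twistedMatching z) = z := by
  have h : twistedMatching z = (twistedSwap z.val : ℕ) := rfl
  rw [h, twistedMatching_natCast (twistedSwap_lt hn hn' z.val_lt), twistedSwap_twistedSwap,
    ZMod.natCast_zmod_val]

theorem twistedMatching_cases [NeZero n] (z : ZMod n) :
    (z = 0 ∧ twistedMatching z - z = 5) ∨ (z = 5 ∧ twistedMatching z - z = -5) ∨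
    ((z = 4 ∨ z = 3) ∧ twistedMatching z - z = 3) ∨
    ((z = 7 ∨ z = 6) ∧ twistedMatching z - z = -3) ∨
    twistedMatching z - z = 1 ∨ twistedMatching z - z = -1 := by
  have hz : z = (z.val : ZMod n) := (ZMod.natCast_zmod_val z).symm
  have hm : twistedMatching z = (twistedSwap z.val : ℕ) := rfl
  have hc : ∀ {j k : ℕ}, j = k → (j : ZMod n) = k := fun h => by rw [h]
  rcases twistedSwap_cases z.val with ⟨h, h'⟩ | ⟨h, h'⟩ | ⟨h, h'⟩ | ⟨h, h'⟩ | h' | h' <;>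
    replace h' := hc h' <;> push_cast at h' <;> rw [← hm, ← hz] at h'
  · exact Or.inl ⟨by simpa [← hz] using hc h, by linear_combination h'⟩
  · exact Or.inr (Or.inl ⟨by simpa [← hz] using hc h, by linear_combination - h'⟩)
  · exact Or.inr (Or.inr (Or.inl ⟨h.imp (fun h => by simpa [← hz] using hc h)
      (fun h => by simpa [← hz] using hc h), by linear_combination h'⟩))
  · exact Or.inr (Or.inr (Or.inr (Or.inl ⟨h.imp (fun h => by simpa [← hz] using hc h)
      (fun h => by simpa [← hz] using hc h), by linear_combination - h'⟩)))
  · exact Or.inr (Or.inr (Or.inr (Or.inr (Or.inl (by linear_combination h')))))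
  · exact Or.inr (Or.inr (Or.inr (Or.inr (Or.inr (by linear_combination - h')))))

theorem parity_twistedMatching [NeZero n] (hn : 2 ∣ n) (z : ZMod n) :
    ZMod.parity hn (twistedMatching z) = ZMod.parity hn z + 1 := by
  have : ZMod.parity hn (twistedMatching z - z) = 1 := by
    have h5 : (5 : ZMod 2) = 1 := rfl
    have h3 : (3 : ZMod 2) = 1 := rfl
    have h1 : (-1 : ZMod 2) = 1 := rfl
    rcases twistedMatching_cases z with h | h | h | h | h | h
    · rw [h.2, map_ofNat, h5]
    · rw [h.2, map_neg, map_ofNat, h5, h1]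
    · rw [h.2, map_ofNat, h3]
    · rw [h.2, map_neg, map_ofNat, h3, h1]
    · rw [h, map_one]
    · rw [h, map_neg, map_one, h1]
  rw [map_sub] at this
  linear_combination this

/-- An affine bijection commuting with the twisted matching is the identity. -/
theorem eq_id_of_commute_twistedMatching (hn' : 20 < n) {α : ZMod n → ZMod n}
    (hα : Function.Injective α) {s c : ZMod n} (hs : ∀ a, α a = s * a + c)
    (hcomm : ∀ a, α (twistedMatching a) = twistedMatching (α a)) (a : ZMod n) :
    α a = a := by
  have : NeZero n := ⟨by omega⟩
  have hne : ∀ k : ℕ, 0 < k → k < 20 → (k : ZMod n) ≠ 0 := by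
    intro k h0 hk h
    have := ZMod.natCast_injOn (n := n) (j := k) (k := 0) (by omega) (by omega) (by simpa using h)
    omega
  have h2 : (2 : ZMod n) ≠ 0 := by exact_mod_cast hne 2 (by omega) (by omega)
  have h4 : (4 : ZMod n) ≠ 0 := by exact_mod_cast hne 4 (by omega) (by omega)
  have h6 : (6 : ZMod n) ≠ 0 := by exact_mod_cast hne 6 (by omega) (by omega)
  have h8 : (8 : ZMod n) ≠ 0 := by exact_mod_cast hne 8 (by omega) (by omega)
  have h10 : (10 : ZMod n) ≠ 0 := by exact_mod_cast hne 10 (by omega) (by omega)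
  have hd : ∀ a, twistedMatching (α a) - α a = s * (twistedMatching a - a) := by
    intro a
    rw [← hcomm, hs, hs]
    ring
  have m (k : ℕ) (hk : k < 20) : twistedMatching (k : ZMod n) = twistedSwap k :=
    twistedMatching_natCast (by omega)
  have m0 : twistedMatching (0 : ZMod n) = 5 := by simpa [twistedSwap] using m 0 (by omega)
  have m1 : twistedMatching (1 : ZMod n) = 2 := by simpa [twistedSwap] using m 1 (by omega)
  have m4 : twistedMatching (4 : ZMod n) = 7 := by simpa [twistedSwap] using m 4 (by omega)
  have m8 : twistedMatching (8 : ZMod n) = 9 := by simpa [twistedSwap] using m 8 (by omega)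
  have m10 : twistedMatching (10 : ZMod n) = 11 := by simpa [twistedSwap] using m 10 (by omega)
  have m12 : twistedMatching (12 : ZMod n) = 13 := by simpa [twistedSwap] using m 12 (by omega)
  have d8 := hd 8
  have d10 := hd 10
  have d12 := hd 12
  rw [m8, show (9 - 8 : ZMod n) = 1 by ring, mul_one] at d8
  rw [m10, show (11 - 10 : ZMod n) = 1 by ring, mul_one] at d10
  rw [m12, show (13 - 12 : ZMod n) = 1 by ring, mul_one] at d12
  have n1 : α 8 ≠ α 10 := fun h => h2 (by linear_combination - hα h)
  have n2 : α 8 ≠ α 12 := fun h => h4 (by linear_combination - hα h)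
  have n3 : α 10 ≠ α 12 := fun h => h2 (by linear_combination - hα h)
  have c8 := twistedMatching_cases (α 8)
  have c10 := twistedMatching_cases (α 10)
  have c12 := twistedMatching_cases (α 12)
  rw [d8] at c8
  rw [d10] at c10
  rw [d12] at c12
  have e1 : (5 : ZMod n) ≠ -5 := fun h => h10 (by linear_combination h)
  have e2 : (5 : ZMod n) ≠ 3 := fun h => h2 (by linear_combination h)
  have e3 : (5 : ZMod n) ≠ -3 := fun h => h8 (by linear_combination h)
  have e4 : (-5 : ZMod n) ≠ 3 := fun h => h8 (by linear_combination - h)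
  have e5 : (-5 : ZMod n) ≠ -3 := fun h => h2 (by linear_combination - h)
  have e6 : (3 : ZMod n) ≠ -3 := fun h => h6 (by linear_combination h)
  have e7 : (5 : ZMod n) ≠ 1 := fun h => h4 (by linear_combination h)
  have e8 : (5 : ZMod n) ≠ -1 := fun h => h6 (by linear_combination h)
  have hs1 : s = 1 ∨ s = -1 := by
    clear hd m0 m1 m4 d8 d10 d12 hcomm hs m m8 m10 m12
    generalize α 8 = u at *
    generalize α 10 = v at *
    generalize α 12 = w at *
    rcases c8 with ⟨h, h'⟩ | ⟨h, h'⟩ | ⟨h, h'⟩ | ⟨h, h'⟩ | h' | h'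
    · simp only [h', e1, e2, e3, e7, e8, and_false, or_false, and_true] at c10
      exact absurd (h.trans c10.symm) n1
    · simp only [h', e1.symm, e4, e5, and_false, false_or, and_true] at c10
      rcases c10 with c | c
      · exact absurd (h.trans c.symm) n1
      · rwa [h']
    · simp only [h', e2.symm, e4.symm, e6, and_false, false_or, and_true] at c10 c12
      rw [← h'] at c10 c12
      clear e1 e2 e3 e4 e5 e6 e7 e8 h2 h4 h6 h8 h10
      grind
    · simp only [h', e3.symm, e5.symm, e6.symm, and_false, false_or, and_true] at c10 c12
      rw [← h'] at c10 c12
      clear e1 e2 e3 e4 e5 e6 e7 e8 h2 h4 h6 h8 h10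
      grind
    · exact Or.inl h'
    · exact Or.inr h'
  have d0 := hd 0
  have c0 := twistedMatching_cases (α 0)
  have a0 : α 0 = c := by rw [hs]; ring
  rw [d0, m0, a0, sub_zero] at c0
  rcases hs1 with rfl | rfl
  · simp only [one_mul, e1, e2, e3, e7, e8, and_false, or_false, and_true] at c0
    rw [hs, c0]
    ring
  · have e7' : (-5 : ZMod n) ≠ -1 := fun h => e7 (neg_injective h)
    have e8' : (-5 : ZMod n) ≠ 1 := fun h => e8 (by rw [← h, neg_neg])
    simp only [neg_mul, one_mul, e1.symm, e4, e5, e7', e8', and_false, false_or, or_false,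
      and_true] at c0
    have h := hcomm 4
    rw [m4, hs 7, hs 4, c0, show (-1 : ZMod n) * 4 + 5 = 1 by ring, m1] at h
    exact absurd (by linear_combination - h) h4

end TwistedMatching

/-- A labelling by `ZMod n` of a holed system which no nontrivial affine bijection of `ZMod n`
respects, up to a permutation of the hole. -/
structure HoledSystem.IsRigidLabelling {X : Type*} {n : ℕ} (hn : 2 ∣ n)
    (E : HoledSystem X (ZMod n)) (x₀ : X) : Prop where
  partner_eq : ∀ a, E.partner x₀ a = twistedMatching a
  exists_parity_eq : ∀ x, x ≠ x₀ → ∃ a,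
    ZMod.parity hn (E.partner x a) = ZMod.parity hn a

theorem HoledSystem.IsRigidLabelling.eq_id {X : Type*} {n : ℕ} {hn : 2 ∣ n} (hn' : 20 < n)
    {E : HoledSystem X (ZMod n)} {x₀ : X} (hE : E.IsRigidLabelling hn x₀)
    {α : ZMod n → ZMod n} (hα : Function.Bijective α) {s c : ZMod n}
    (hs : ∀ a, α a = s * a + c) {π : X → X}
    (hcomm : ∀ x a, α (E.partner x a) = E.partner (π x) (α a)) :
    (∀ a, α a = a) ∧ ∀ x, π x = x := by
  have : NeZero n := ⟨by omega⟩
  have hps : ZMod.parity hn s = 1 := by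
    obtain ⟨a, ha⟩ := hα.2 0
    obtain ⟨b, hb⟩ := hα.2 1
    have h1 : s * (b - a) = 1 := by
      rw [hs] at ha hb
      linear_combination hb - ha
    have h2 := congrArg (ZMod.parity hn) h1
    rw [map_mul, map_one] at h2
    generalize ZMod.parity hn s = y at h2
    generalize ZMod.parity hn (b - a) = z at h2
    revert y z
    decide
  have hpar : ∀ a, ZMod.parity hn (α a) = ZMod.parity hn a + ZMod.parity hn c := by
    intro a
    rw [hs, map_add, map_mul, hps, one_mul]
  have hπ : π x₀ = x₀ := by
    by_contra hne
    obtain ⟨a, ha⟩ := hE.exists_parity_eq _ hne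
    obtain ⟨b, rfl⟩ := hα.2 a
    rw [← hcomm, hpar, hpar, hE.partner_eq, parity_twistedMatching] at ha
    have : (1 : ZMod 2) = 0 := by linear_combination ha
    exact absurd this (by decide)
  have hid : ∀ a, α a = a := by
    refine eq_id_of_commute_twistedMatching hn' hα.1 hs fun a => ?_
    have := hcomm x₀ a
    rwa [hπ, hE.partner_eq, hE.partner_eq] at this
  refine ⟨hid, fun x => ?_⟩
  have := hcomm x 0
  simp only [hid] at this
  exact (E.partner_injective 0 this).symm

theorem add_apply_of_zeroSum {A : Type*} [AddCommGroup A] {f k l : A → A}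
    (h : ∀ a b, l (-a - b) = -f a - k b) (a b : A) : f (a + b) = f a + f b - f 0 := by
  have h1 := h (a + b) 0
  have h2 := h a b
  have h3 := h b 0
  have h4 := h 0 b
  rw [show -(a + b) - 0 = -a - b by abel, h2] at h1
  rw [show -b - 0 = -0 - b by abel, h4] at h3
  have e1 : f (a + b) = f a + k b - k 0 := by
    have : f (a + b) = -(-f (a + b) - k 0) - k 0 := by abel
    rw [this, ← h1]
    abel
  have e2 : f b = f 0 + k b - k 0 := by
    have : f b = -(-f b - k 0) - k 0 := by abel
    rw [this, ← h3]
    abel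
  rw [e1, e2]
  abel

theorem ZMod.affine_of_add {n : ℕ} {f : ZMod n → ZMod n}
    (h : ∀ a b, f (a + b) = f a + f b - f 0) : ∃ s c, ∀ a, f a = s * a + c := by
  let F : ZMod n →+ ZMod n :=
    { toFun := fun a => f a - f 0
      map_zero' := sub_self _
      map_add' := fun a b => by
        rw [h]
        ring }
  refine ⟨F 1, f 0, fun a => ?_⟩
  have h1 : F a = F 1 * a := by
    obtain ⟨k, rfl⟩ := ZMod.intCast_surjective a
    have h2 := map_zsmul F k 1
    rw [zsmul_one, zsmul_eq_mul] at h2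
    rw [h2, mul_comm]
  have h2 : F a = f a - f 0 := rfl
  rw [← h1, h2]
  ring

namespace SteinerOp

section MooreAut

variable {V X : Type*} [Fintype X] {n : ℕ} [NeZero n]

/-- The union of the hole and the fibre over a point of `V`. -/
def overPoint (X : Type*) [Fintype X] (n : ℕ) [NeZero n] {V : Type*} (v : V) :
    Finset (X ⊕ V × ZMod n) :=
  Finset.univ.disjSum ({v} ×ˢ Finset.univ)

theorem inl_mem_overPoint (v : V) (x : X) : Sum.inl x ∈ overPoint X n v := by
  simp [overPoint]

theorem inr_mem_overPoint {v w : V} {a : ZMod n} :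
    Sum.inr (w, a) ∈ overPoint X n v ↔ w = v := by
  simp [overPoint, eq_comm]

theorem card_overPoint (v : V) : (overPoint X n v).card = Fintype.card X + n := by
  rw [overPoint, Finset.card_disjSum, Finset.card_product]
  simp

theorem op_mem_overPoint {S : SteinerOp V} {E : HoledSystem X (ZMod n)} {SX : SteinerOp X}
    {v : V} {p q : X ⊕ V × ZMod n} (hp : p ∈ overPoint X n v) (hq : q ∈ overPoint X n v) :
    (S.moore E SX).op p q ∈ overPoint X n v := by
  rcases p with x | ⟨u, a⟩ <;> rcases q with y | ⟨w, b⟩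
  · exact inl_mem_overPoint v _
  · rw [moore_inl_inr]
    exact inr_mem_overPoint.2 (inr_mem_overPoint.1 hq)
  · rw [comm, moore_inl_inr]
    exact inr_mem_overPoint.2 (inr_mem_overPoint.1 hp)
  · obtain rfl := inr_mem_overPoint.1 hp
    obtain rfl := inr_mem_overPoint.1 hq
    by_cases hab : a = b
    · rwa [hab, idem]
    · rw [moore_of_eq _ _ _ _ hab]
      rcases E.join a b with x | c
      · exact inl_mem_overPoint _ x
      · exact inr_mem_overPoint.2 rfl

variable {S : SteinerOp V} {E : HoledSystem X (ZMod n)} {SX : SteinerOp X} {hn : 2 ∣ n} {x₀ : X}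

theorem exists_overPoint_of_isHom [Fintype V] (hE : E.IsRigidLabelling hn x₀)
    (hlt : Fintype.card V * Fintype.card X < n) (hlt' : 6 * Fintype.card V < n)
    {g : Equiv.Perm (X ⊕ V × ZMod n)} (hg : (S.moore E SX).IsHom g) (v : V) :
    ∃ w, ∀ p, g p ∈ overPoint X n w ↔ p ∈ overPoint X n v := by
  have hB : ({0, 5, 4, 3, 7, 6} : Finset (ZMod n)).card ≤ 6 := Finset.card_le_six
  have hpart : ∀ a ∉ ({0, 5, 4, 3, 7, 6} : Finset (ZMod n)),
      E.partner x₀ a - a = 1 ∨ E.partner x₀ a - a = -1 := by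
    intro a ha
    simp only [Finset.mem_insert, Finset.mem_singleton, not_or] at ha
    rw [hE.partner_eq]
    have := twistedMatching_cases a
    tauto
  have hcl : ∀ p ∈ (overPoint X n v).map g.toEmbedding,
      ∀ q ∈ (overPoint X n v).map g.toEmbedding,
      (S.moore E SX).op p q ∈ (overPoint X n v).map g.toEmbedding := by
    intro p hp q hq
    obtain ⟨p', hp', rfl⟩ := Finset.mem_map.1 hp
    obtain ⟨q', hq', rfl⟩ := Finset.mem_map.1 hq
    exact Finset.mem_map.2 ⟨_, op_mem_overPoint hp' hq', hg p' q'⟩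
  obtain ⟨w, hw⟩ := exists_fibre_of_closed hB hpart hlt hlt' hcl
    (by rw [Finset.card_map, card_overPoint])
  have hsub : (overPoint X n v).map g.toEmbedding ⊆ overPoint X n w := by
    rintro (x | ⟨u, a⟩) hp
    · exact inl_mem_overPoint _ x
    · exact inr_mem_overPoint.2 (hw u a hp)
  have heq := Finset.eq_of_subset_of_card_le hsub
    (by rw [Finset.card_map, card_overPoint, card_overPoint])
  refine ⟨w, fun p => ?_⟩
  rw [← heq]
  simp

/-- The automorphisms of Moore's construction from a rigidly labelled holed system come
from automorphisms of `V`. -/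
theorem exists_of_isHom_moore [Fintype V] (hE : E.IsRigidLabelling hn x₀) (hn' : 20 < n)
    (hlt : Fintype.card V * Fintype.card X < n) (hlt' : 6 * Fintype.card V < n)
    [Nontrivial V] {g : Equiv.Perm (X ⊕ V × ZMod n)} (hg : (S.moore E SX).IsHom g) :
    ∃ h : Equiv.Perm V, S.IsHom h ∧ (∀ v a, g (Sum.inr (v, a)) = Sum.inr (h v, a)) ∧
      ∀ x, g (Sum.inl x) = Sum.inl x := by
  choose h hh using exists_overPoint_of_isHom hE hlt hlt' hg
  have hinj : Function.Injective h := by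
    intro v w hvw
    have h1 := hh v (Sum.inr (v, 0))
    rw [hvw, hh w] at h1
    exact inr_mem_overPoint.1 (h1.2 (inr_mem_overPoint.2 rfl))
  have hX : ∀ x, ∃ y, g (Sum.inl x) = Sum.inl y := by
    intro x
    obtain ⟨v, w, hvw⟩ := exists_pair_ne V
    have h1 := (hh v (Sum.inl x)).2 (inl_mem_overPoint _ x)
    have h2 := (hh w (Sum.inl x)).2 (inl_mem_overPoint _ x)
    rcases hgx : g (Sum.inl x) with y | ⟨u, a⟩
    · exact ⟨y, rfl⟩
    · rw [hgx, inr_mem_overPoint] at h1 h2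
      exact absurd (hinj (h1.symm.trans h2)) hvw
  have hA : ∀ v a, ∃ b, g (Sum.inr (v, a)) = Sum.inr (h v, b) := by
    intro v a
    have h1 := (hh v (Sum.inr (v, a))).2 (inr_mem_overPoint.2 rfl)
    rcases hgp : g (Sum.inr (v, a)) with y | ⟨u, b⟩
    · obtain ⟨w, hw⟩ := exists_ne v
      have h2 := (hh w (Sum.inr (v, a))).1 (by rw [hgp]; exact inl_mem_overPoint _ y)
      exact absurd (inr_mem_overPoint.1 h2).symm hw
    · rw [hgp, inr_mem_overPoint] at h1
      exact ⟨b, by rw [h1]⟩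
  choose π hπ using hX
  choose α hα using hA
  have hop : ∀ v w, v ≠ w → h (S.op v w) = S.op (h v) (h w) ∧
      ∀ a b, α (S.op v w) (-a - b) = -α v a - α w b := by
    intro v w hvw
    have key : ∀ a b, (h (S.op v w), α (S.op v w) (-a - b)) =
        (S.op (h v) (h w), -α v a - α w b) := by
      intro a b
      have h1 := hg (Sum.inr (v, a)) (Sum.inr (w, b))
      rw [moore_of_ne _ _ _ hvw, hα, hα, hα, moore_of_ne _ _ _ (hinj.ne hvw)] at h1
      exact Sum.inr_injective h1
    exact ⟨congrArg Prod.fst (key 0 0), fun a b => congrArg Prod.snd (key a b)⟩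
  have hαinj : ∀ v, Function.Injective (α v) := by
    intro v a b hab
    have h1 : g (Sum.inr (v, a)) = g (Sum.inr (v, b)) := by rw [hα, hα, hab]
    exact congrArg Prod.snd (Sum.inr_injective (g.injective h1))
  have hrig : ∀ v, (∀ a, α v a = a) ∧ ∀ x, π x = x := by
    intro v
    obtain ⟨w, hw⟩ := exists_ne v
    obtain ⟨s, c, hs⟩ := ZMod.affine_of_add
      (add_apply_of_zeroSum (hop v w hw.symm).2)
    refine hE.eq_id hn' (Finite.injective_iff_bijective.1 (hαinj v)) hs fun x a => ?_
    have h1 := hg (Sum.inl x) (Sum.inr (v, a))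
    rw [moore_inl_inr, hα, hα, hπ, moore_inl_inr] at h1
    exact congrArg Prod.snd (Sum.inr_injective h1)
  refine ⟨Equiv.ofBijective h (Finite.injective_iff_bijective.1 hinj), ?_, ?_, ?_⟩
  · intro v w
    by_cases hvw : v = w
    · rw [hvw, idem, idem]
    · exact (hop v w hvw).1
  · intro v a
    rw [hα, (hrig v).1]
    rfl
  · intro x
    rw [hπ, (hrig (Classical.arbitrary V)).2]

theorem isFullHom_moore [Fintype V] (hE : E.IsRigidLabelling hn x₀) (hn' : 20 < n)
    (hlt : Fintype.card V * Fintype.card X < n) (hlt' : 6 * Fintype.card V < n)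
    [Nontrivial V] : S.IsFullHom (S.moore E SX) fun v => Sum.inr (v, 0) where
  injective v w h := congrArg Prod.fst (Sum.inr_injective h)
  map_op v w := by
    by_cases hvw : v = w
    · rw [hvw, idem, idem]
    · rw [moore_of_ne _ _ _ hvw]
      simp
  restrict g hg := by
    obtain ⟨h, hh, h1, -⟩ := exists_of_isHom_moore hE hn' hlt hlt' hg
    exact ⟨h, hh, fun v => h1 v 0⟩
  extend h hh := by
    refine ⟨_, ⟨isHom_moore_of_isHom hh, fun v => rfl⟩, ?_⟩
    rintro g ⟨hg, hgv⟩
    obtain ⟨h', -, h1, h2⟩ := exists_of_isHom_moore hE hn' hlt hlt' hg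
    have h3 : ∀ v, h' v = h v := fun v => by
      have := hgv v
      rw [h1] at this
      exact congrArg Prod.fst (Sum.inr_injective this)
    ext (x | ⟨v, a⟩)
    · rw [h2]
      rfl
    · rw [h1, h3]
      rfl

end MooreAut

theorem isHom_map {α β : Type*} {U : SteinerOp α} {e : α ≃ β} {g : Equiv.Perm β} :
    (U.map e).IsHom g ↔ U.IsHom (e.symm.permCongr g) := by
  constructor
  · intro h a b
    have := h (e a) (e b)
    simp only [map, Equiv.symm_apply_apply] at this
    simp [Equiv.permCongr_apply, this]
  · intro h a b
    have := h (e.symm a) (e.symm b)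
    simp only [Equiv.permCongr_apply, Equiv.symm_symm, Equiv.apply_symm_apply] at this
    simp [map, ← this]

theorem IsFullHom.map {α β γ : Type*} {S : SteinerOp α} {U : SteinerOp β} {φ : α → β}
    (h : S.IsFullHom U φ) (e : β ≃ γ) : S.IsFullHom (U.map e) (e ∘ φ) where
  injective := e.injective.comp h.injective
  map_op a b := by simp [SteinerOp.map, h.map_op]
  restrict g hg := by
    obtain ⟨k, hk, hx⟩ := h.restrict _ (isHom_map.1 hg)
    refine ⟨k, hk, fun x => ?_⟩
    have := hx x
    simp only [Equiv.permCongr_apply, Equiv.symm_symm] at this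
    simp [← this]
  extend k hk := by
    obtain ⟨g, ⟨hg, hgx⟩, huniq⟩ := h.extend k hk
    refine ⟨e.permCongr g, ⟨isHom_map.2 ?_, fun x => ?_⟩, ?_⟩
    · convert hg using 1
      ext
      simp
    · simp [hgx]
    · rintro g' ⟨hg', hgx'⟩
      rw [← huniq _ ⟨isHom_map.1 hg', fun x => by
        simpa [Equiv.symm_apply_eq] using hgx' x⟩]
      ext
      simp

end SteinerOp

theorem two_mul_card_of_swap {A : Type*} [Fintype A] {f : A → A} (hf : ∀ a, f (f a) = a)
    {p : A → Prop} (hp : ∀ a, p (f a) ↔ ¬ p a) :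
    2 * Fintype.card {a // p a} = Fintype.card A := by
  have h1 : Fintype.card {a // p a} = Fintype.card {a // ¬ p a} :=
    Fintype.card_congr
      { toFun := fun a => ⟨f a, by rw [hp, not_not]; exact a.2⟩
        invFun := fun a => ⟨f a, by rw [hp]; exact a.2⟩
        left_inv := fun a => Subtype.ext (hf a)
        right_inv := fun a => Subtype.ext (hf a) }
  have h2 := Fintype.card_subtype_compl p
  have h3 := Fintype.card_subtype_le p
  omega

/-- Two sets of the same size, each with a 2-colouring and a colour-changing involution, are
isomorphic. -/
theorem exists_equiv_of_swap {A B : Type*} [Fintype A] [Fintype B]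
    (hcard : Fintype.card A = Fintype.card B) {f : A → A} {f' : B → B}
    (hf : ∀ a, f (f a) = a) (hf' : ∀ b, f' (f' b) = b) {p : A → Prop} {p' : B → Prop}
    (hp : ∀ a, p (f a) ↔ ¬ p a) (hp' : ∀ b, p' (f' b) ↔ ¬ p' b) :
    ∃ e : A ≃ B, (∀ a, e (f a) = f' (e a)) ∧ ∀ a, p' (e a) ↔ p a := by
  have hAB : Fintype.card {a // p a} = Fintype.card {b // p' b} := by
    have h1 := two_mul_card_of_swap hf hp
    have h2 := two_mul_card_of_swap hf' hp'
    omega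
  let e₀ := Fintype.equivOfCardEq hAB
  let e : A → B := fun a => if h : p a then e₀ ⟨a, h⟩ else
    f' (e₀ ⟨f a, (hp a).2 h⟩)
  have hpe : ∀ a, p' (e a) ↔ p a := by
    intro a
    by_cases h : p a
    · simp only [e, dif_pos h, h, iff_true]
      exact (e₀ _).2
    · simp only [e, dif_neg h, h, iff_false, hp', not_not]
      exact (e₀ _).2
  have hfinj : Function.Injective f' := fun b c h => by rw [← hf' b, h, hf']
  have hinj : Function.Injective e := by
    intro a b hab
    have hiff : p a ↔ p b := by rw [← hpe a, ← hpe b, hab]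
    by_cases h : p a
    · have hb := hiff.1 h
      simp only [e, dif_pos h, dif_pos hb] at hab
      exact congrArg Subtype.val (e₀.injective (Subtype.ext hab))
    · have hb := fun hb => h (hiff.2 hb)
      simp only [e, dif_neg h, dif_neg hb] at hab
      have := congrArg Subtype.val (e₀.injective (Subtype.ext (hfinj hab)))
      rw [← hf a, ← hf b]
      exact congrArg f this
  have hbij : Function.Bijective e :=
    (Fintype.bijective_iff_injective_and_card e).2 ⟨hinj, hcard⟩
  refine ⟨Equiv.ofBijective e hbij, fun a => ?_, hpe⟩
  change e (f a) = f' (e a)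
  by_cases h : p a
  · have h' : ¬ p (f a) := by rw [hp, not_not]; exact h
    simp only [e, dif_neg h', dif_pos h, hf]
  · have h' : p (f a) := (hp a).2 h
    simp only [e, dif_pos h', dif_neg h, hf']

namespace HoledSystem

/-- A small set of points, independent for the matching of `x₀`, spanning an edge of the
matching of every `x ∈ s`. -/
theorem exists_independent {X A : Type*} [Fintype A] (E : HoledSystem X A) (x₀ : X)
    (s : Finset X) (hs : x₀ ∉ s) (hcard : 8 * s.card < Fintype.card A) :
    ∃ F : Finset A, F.card ≤ 2 * s.card ∧ (∀ a ∈ F, E.partner x₀ a ∉ F) ∧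
      ∀ x ∈ s, ∃ a ∈ F, E.partner x a ∈ F := by
  induction s using Finset.induction_on with
  | empty => exact ⟨∅, by simp⟩
  | insert x s hxs ih =>
    rw [Finset.card_insert_of_notMem hxs] at hcard ⊢
    obtain ⟨F, hF, hind, hedge⟩ := ih (fun h => hs (Finset.mem_insert_of_mem h)) (by omega)
    have hx : x ≠ x₀ := fun h => hs (by rw [h]; exact Finset.mem_insert_self _ _)
    set B := F ∪ F.image (E.partner x₀) with hB
    have hBcard : (B ∪ B.image (E.partner x)).card < Fintype.card A := by
      have h1 := Finset.card_union_le B (B.image (E.partner x))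
      have h2 := Finset.card_union_le F (F.image (E.partner x₀))
      have h3 := Finset.card_image_le (s := B) (f := E.partner x)
      have h4 := Finset.card_image_le (s := F) (f := E.partner x₀)
      rw [← hB] at h2
      omega
    obtain ⟨a, ha⟩ : ∃ a, a ∉ B ∪ B.image (E.partner x) := by
      by_contra hcon
      push Not at hcon
      rw [Finset.eq_univ_of_forall hcon, Finset.card_univ] at hBcard
      exact lt_irrefl _ hBcard
    simp only [hB, Finset.mem_union, Finset.mem_image, not_or, not_exists, not_and] at ha
    obtain ⟨⟨ha1, ha2⟩, ha3⟩ := ha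
    have hpx := E.partner_partner x
    have hp0 := E.partner_partner x₀
    have hne : E.partner x a ≠ E.partner x₀ a := fun h => hx (E.partner_injective a h)
    refine ⟨insert a (insert (E.partner x a) F), ?_, ?_, ?_⟩
    · have h1 := Finset.card_insert_le a (insert (E.partner x a) F)
      have h2 := Finset.card_insert_le (E.partner x a) F
      omega
    · intro b hb
      simp only [Finset.mem_insert] at hb ⊢
      rcases hb with rfl | rfl | hb
      · rintro (h | h | h)
        · exact E.partner_ne _ _ h
        · exact hne h.symm
        · exact ha2 _ h (hp0 b)
      · rintro (h | h | h)
        · exact hne (by rw [← hp0 (E.partner x a), h])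
        · exact E.partner_ne _ _ h
        · exact ha3 _ (Or.inr ⟨_, h, hp0 _⟩) (hpx a)
      · rintro (h | h | h)
        · exact ha2 b hb h
        · exact ha3 _ (Or.inr ⟨b, hb, h⟩) (hpx a)
        · exact hind b hb h
    · intro y hy
      rcases Finset.mem_insert.1 hy with rfl | hy
      · exact ⟨a, by simp, by simp⟩
      · obtain ⟨b, hb, hb'⟩ := hedge y hy
        exact ⟨b, by simp [hb], by simp [hb']⟩

theorem exists_isRigidLabelling {X A : Type*} [Fintype X] [Fintype A] (E : HoledSystem X A)
    (x₀ : X) {n : ℕ} (hn : 2 ∣ n) (hn' : 20 < n) (hcard : Fintype.card A = n)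
    (hX : 8 * Fintype.card X < n) :
    ∃ e : A ≃ ZMod n, (E.map e).IsRigidLabelling hn x₀ := by
  have : NeZero n := ⟨by omega⟩
  obtain ⟨F, -, hind, hedge⟩ := E.exists_independent x₀ (Finset.univ.erase x₀) (by simp) (by
    have := Finset.card_le_univ (Finset.univ.erase x₀)
    omega)
  have hp0 := E.partner_partner x₀
  let ν := Fintype.equivFin A
  let p : A → Prop := fun a => a ∈ F ∨ (E.partner x₀ a ∉ F ∧ ν a < ν (E.partner x₀ a))
  have hp : ∀ a, p (E.partner x₀ a) ↔ ¬ p a := by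
    intro a
    have h1 := hind a
    have h2 : ν a ≠ ν (E.partner x₀ a) := fun h => E.partner_ne x₀ a (ν.injective h).symm
    simp only [p, hp0]
    grind
  have hbool : ∀ z : ZMod 2, z + 1 = 0 ↔ ¬ z = 0 := by decide
  obtain ⟨e, he, hpe⟩ := exists_equiv_of_swap (hcard.trans (ZMod.card n).symm) hp0
    (twistedMatching_twistedMatching hn hn') hp
    (p' := fun z : ZMod n => ZMod.parity hn z = 0)
    (fun z => by rw [parity_twistedMatching, hbool])
  refine ⟨e, ⟨fun a => ?_, fun x hx => ?_⟩⟩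
  · change e (E.partner x₀ (e.symm a)) = _
    rw [he, e.apply_symm_apply]
  · obtain ⟨a, ha, ha'⟩ := hedge x (by simp [hx])
    refine ⟨e a, ?_⟩
    change ZMod.parity hn (e (E.partner x (e.symm (e a)))) = _
    rw [e.symm_apply_apply, (hpe a).2 (Or.inl ha), (hpe (E.partner x a)).2 (Or.inl ha')]

end HoledSystem

/-- Adding new hole points: the triples of a holed system on pairs of the form
`p, N c p` are replaced by the triples `c, p, N c p` with a new point `c` of the hole. -/
def HoledSystem.adjoin {X A C : Type*} (E : HoledSystem X A) (N : C → A → A)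
    (N_ne : ∀ c p, N c p ≠ p) (N_N : ∀ c p, N c (N c p) = p)
    (N_inj : ∀ c d p, N c p = N d p → c = d)
    (N_join : ∀ c p, ∃ d, E.join p (N c p) = Sum.inr (N d p)) :
    HoledSystem (X ⊕ C) A where
  join p q := if h : ∃ c, q = N c p then Sum.inl (Sum.inr h.choose)
    else Sum.map Sum.inl id (E.join p q)
  partner x p := Sum.elim (fun x => E.partner x p) (fun c => N c p) x
  join_comm p q := by
    by_cases h : ∃ c, q = N c p
    · have h' : ∃ c, p = N c q := by
        obtain ⟨c, rfl⟩ := h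
        exact ⟨c, (N_N c p).symm⟩
      rw [dif_pos h, dif_pos h']
      have h1 := h.choose_spec
      have h2 := h'.choose_spec
      generalize h.choose = c at h1 ⊢
      generalize h'.choose = d at h2 ⊢
      rw [N_inj c d q (by rw [← h2, h1, N_N])]
    · have h' : ¬ ∃ c, p = N c q := by
        rintro ⟨c, rfl⟩
        exact h ⟨c, (N_N c q).symm⟩
      rw [dif_neg h, dif_neg h', E.join_comm]
  join_block p q r hpq h := by
    by_cases h0 : ∃ c, q = N c p
    · simp [dif_pos h0] at h
    · rw [dif_neg h0] at h
      rcases h1 : E.join p q with x | s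
      · simp [h1] at h
      · simp only [h1, Sum.map_inr, id, Sum.inr.injEq] at h
        subst h
        have h2 := E.join_block _ _ _ hpq h1
        refine ⟨h2.1, ?_⟩
        rw [dif_neg, h2.2]
        · rfl
        · rintro ⟨c, rfl⟩
          obtain ⟨d, hd⟩ := N_join c p
          rw [h2.2] at hd
          exact h0 ⟨d, Sum.inr_injective hd⟩
  partner_ne x p := by
    rcases x with x | c
    · exact E.partner_ne x p
    · exact N_ne c p
  join_partner x p := by
    rcases x with x | c
    · refine (dif_neg ?_).trans (by simp [E.join_partner])
      rintro ⟨c, hc⟩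
      obtain ⟨d, hd⟩ := N_join c p
      rw [← hc, Sum.elim_inl, E.join_partner] at hd
      exact Sum.inl_ne_inr hd
    · have h : ∃ d, N c p = N d p := ⟨c, rfl⟩
      refine (dif_pos h).trans ?_
      exact congrArg (fun d => Sum.inl (Sum.inr d)) (N_inj _ _ _ h.choose_spec).symm
  eq_partner p q x hpq h := by
    by_cases h0 : ∃ c, q = N c p
    · rw [dif_pos h0] at h
      have := Sum.inl_injective h
      subst this
      exact h0.choose_spec
    · rw [dif_neg h0] at h
      rcases h1 : E.join p q with y | s
      · simp only [h1, Sum.map_inl, Sum.inl.injEq] at h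
        subst h
        exact E.eq_partner _ _ _ hpq h1
      · simp [h1] at h

/-- The additive group of the field with four elements. -/
abbrev KleinFour := ZMod 2 × ZMod 2

namespace KleinFour

/-- Multiplication by a primitive cube root of unity `ω` of the field with four elements. -/
def omega (g : KleinFour) : KleinFour := (g.2, g.1 + g.2)

/-- The product `ω² g + ω h`, or `ω g + ω² h`, according to the sign `b`. -/
def mix (b : Bool) (g h : KleinFour) : KleinFour :=
  cond b (omega (omega g) + omega h) (omega g + omega (omega h))

theorem mix_not (b : Bool) (g h : KleinFour) : mix (!b) g h = mix b h g := by
  revert b g h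
  decide

theorem mix_mix_left (b : Bool) (g h : KleinFour) : mix b (mix b g h) g = h := by
  revert b g h
  decide

theorem mix_mix_right (b : Bool) (g h : KleinFour) : mix b g (mix b h g) = h := by
  revert b g h
  decide

/-- The elements `ω` and `ω²`. -/
def root (e : Bool) : KleinFour := cond e (0, 1) (1, 1)

theorem add_add_root (e : Bool) (g : KleinFour) : g + root e + root e = g := by
  revert e g
  decide

theorem add_add_one (g : KleinFour) : g + (1, 0) + (1, 0) = g := by
  revert g
  decide

theorem mix_add_root_left (e : Bool) (g : KleinFour) : mix e (g + root e) g = g + (1, 0) := by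
  revert e g
  decide

theorem mix_add_root_right (e : Bool) (g : KleinFour) :
    mix e g (g + root e) = g + root (!e) := by
  revert e g
  decide

theorem mix_add_one (e : Bool) (g : KleinFour) : mix e g (g + (1, 0)) = g + root e := by
  revert e g
  decide

/-- A linear form on the field with four elements not vanishing at `1`. -/
def form (g : KleinFour) : Bool := decide (g.1 = 1)

theorem form_add_one (g : KleinFour) : form (g + (1, 0)) = !form g := by
  revert g
  decide

end KleinFour

/-- A commutative ring in which `2` is invertible, with a choice of one element from each pair
`d, -d`, `d ≠ 0`. -/
structure SignedRing (R : Type*) [CommRing R] where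
  half : R
  two_mul_half : 2 * half = 1
  pos : R → Bool
  pos_neg : ∀ d, d ≠ 0 → pos (-d) = !pos d

namespace SignedRing

variable {R : Type*} [CommRing R] (Z : SignedRing R)

theorem eq_of_two_mul_eq {R : Type*} [CommRing R] (Z : SignedRing R) {a b : R}
    (h : 2 * a = 2 * b) : a = b := by
  linear_combination Z.half * h - (a - b) * Z.two_mul_half

/-- The third point of a triple of the group divisible design below. -/
def third (p q : R × ZMod 3 × KleinFour) : R × ZMod 3 × KleinFour :=
  if p.2.1 = q.2.1 then
    (Z.half * (p.1 + q.1), p.2.1 + 1, KleinFour.mix (Z.pos (Z.half * (q.1 - p.1))) p.2.2 q.2.2)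
  else if q.2.1 = p.2.1 + 1 then
    (2 * q.1 - p.1, p.2.1, KleinFour.mix (Z.pos (q.1 - p.1)) q.2.2 p.2.2)
  else (2 * p.1 - q.1, q.2.1, KleinFour.mix (Z.pos (p.1 - q.1)) p.2.2 q.2.2)

theorem third_same (a b : R) (i : ZMod 3) (g h : KleinFour) : Z.third (a, i, g) (b, i, h) =
    (Z.half * (a + b), i + 1, KleinFour.mix (Z.pos (Z.half * (b - a))) g h) := by
  simp [third]

theorem third_up (a b : R) (i : ZMod 3) (g h : KleinFour) :
    Z.third (a, i, g) (b, i + 1, h) =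
      (2 * b - a, i, KleinFour.mix (Z.pos (b - a)) h g) := by
  simp [third]

theorem third_down (a b : R) (i : ZMod 3) (g h : KleinFour) :
    Z.third (a, i + 1, g) (b, i, h) =
      (2 * a - b, i, KleinFour.mix (Z.pos (a - b)) g h) := by
  have h1 : i + 1 ≠ i := by
    revert i
    decide
  have h2 : i ≠ i + 1 + 1 := by
    revert i
    decide
  simp only [third, if_neg h1, if_neg h2]

theorem level_cases (i j : ZMod 3) : j = i ∨ j = i + 1 ∨ i = j + 1 := by
  revert i j
  decide

/-- A group divisible design of triples with groups of size `12`. -/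
def design : GroupDivisible R (ZMod 3 × KleinFour) where
  op := Z.third
  comm := by
    rintro ⟨a, i, g⟩ ⟨b, j, h⟩ hab
    have hab : a ≠ b := hab
    rcases level_cases i j with rfl | rfl | rfl
    · rw [third_same, third_same, add_comm a b]
      have h0 : Z.half * (b - a) ≠ 0 := fun h => hab (by
        linear_combination -2 * h + (b - a) * Z.two_mul_half)
      rw [show Z.half * (a - b) = -(Z.half * (b - a)) by ring, Z.pos_neg _ h0,
        KleinFour.mix_not]
    · rw [third_up, third_down]
    · rw [third_up, third_down]
  fst_ne := by
    rintro ⟨a, i, g⟩ ⟨b, j, h⟩ hab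
    have hab : a ≠ b := hab
    rcases level_cases i j with rfl | rfl | rfl
    · rw [third_same]
      exact fun h => hab (by linear_combination -2 * h + (a + b) * Z.two_mul_half)
    · rw [third_up]
      exact fun h => hab (Z.eq_of_two_mul_eq (by linear_combination - h))
    · rw [third_down]
      exact fun h => hab (by linear_combination h)
  cancel := by
    rintro ⟨a, i, g⟩ ⟨b, j, h⟩ hab
    have hab : a ≠ b := hab
    rcases level_cases i j with rfl | rfl | rfl
    · rw [third_same, third_up]
      have h1 : 2 * (Z.half * (a + b)) - a = b := by
        linear_combination (a + b) * Z.two_mul_half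
      have h2 : Z.half * (a + b) - a = Z.half * (b - a) := by
        linear_combination a * Z.two_mul_half
      rw [h1, h2, KleinFour.mix_mix_left]
    · rw [third_up, third_same]
      have h1 : Z.half * (a + (2 * b - a)) = b := by
        linear_combination b * Z.two_mul_half
      have h2 : Z.half * (2 * b - a - a) = b - a := by
        linear_combination (b - a) * Z.two_mul_half
      rw [h1, h2, KleinFour.mix_mix_right]
    · rw [third_down, third_down]
      have h0 : a - b ≠ 0 := sub_ne_zero.2 hab
      rw [show 2 * a - (2 * a - b) = b by ring, show a - (2 * a - b) = -(a - b) by ring,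
        Z.pos_neg _ h0, KleinFour.mix_not, KleinFour.mix_mix_left]

end SignedRing

namespace SignedRing

variable {R : Type*} [CommRing R] (Z : SignedRing R)

/-- The unit `1` or `-1`. -/
def sgn (R : Type*) [CommRing R] (e : Bool) : R := cond e 1 (-1)

theorem sgn_not (e : Bool) : sgn R (!e) = -sgn R e := by
  cases e <;> simp [sgn]

theorem sgn_mul_sgn (e : Bool) : sgn R e * sgn R e = 1 := by
  cases e <;> simp [sgn]

theorem pos_sgn_mul {d : R} (h0 : d ≠ 0) (hd : Z.pos d = true) (e : Bool) :
    Z.pos (sgn R e * d) = e := by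
  cases e <;> simp [sgn, hd, Z.pos_neg d h0]

/-- The involution of the point set attached to a difference `d`, a level `j` and a sign `e`,
which is to become a new point of the hole. -/
def shift (d : R) (j : ZMod 3) (e : Bool) (p : R × ZMod 3 × KleinFour) :
    R × ZMod 3 × KleinFour :=
  if p.2.1 = j then (p.1 + sgn R e * d, j + 1, p.2.2 + KleinFour.root e)
  else if p.2.1 = j + 1 then (p.1 - sgn R e * d, j, p.2.2 + KleinFour.root e)
  else (p.1 + 2 * (sgn R (KleinFour.form p.2.2 == e) * d), p.2.1, p.2.2 + (1, 0))

theorem shift_same (d a : R) (j : ZMod 3) (e : Bool) (g : KleinFour) :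
    shift d j e (a, j, g) = (a + sgn R e * d, j + 1, g + KleinFour.root e) := by
  simp [shift]

theorem shift_up (d a : R) (j : ZMod 3) (e : Bool) (g : KleinFour) :
    shift d j e (a, j + 1, g) = (a - sgn R e * d, j, g + KleinFour.root e) := by
  simp [shift]

theorem shift_down (d a : R) (i : ZMod 3) (e : Bool) (g : KleinFour) :
    shift d (i + 1) e (a, i, g) =
      (a + 2 * (sgn R (KleinFour.form g == e) * d), i, g + (1, 0)) := by
  have h1 : i ≠ i + 1 := by
    revert i
    decide
  have h2 : i ≠ i + 1 + 1 := by
    revert i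
    decide
  simp only [shift, if_neg h1, if_neg h2]

theorem shift_ne (d : R) (j : ZMod 3) (e : Bool) (p : R × ZMod 3 × KleinFour) :
    shift d j e p ≠ p := by
  obtain ⟨a, i, g⟩ := p
  have h1 : ∀ i : ZMod 3, i + 1 ≠ i := by decide
  have h2 : ∀ g : KleinFour, g + (1, 0) ≠ g := by decide
  rcases level_cases i j with rfl | rfl | rfl
  · rw [shift_same]
    exact fun h => h1 _ (congrArg (fun p => p.2.1) h)
  · rw [shift_down]
    exact fun h => h2 _ (congrArg (fun p => p.2.2) h)
  · rw [shift_up]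
    exact fun h => h1 _ (congrArg (fun p => p.2.1) h).symm

theorem shift_fst_ne {R : Type*} [CommRing R] (Z : SignedRing R) {d : R}
    (h0 : d ≠ 0) (j : ZMod 3) (e : Bool) (p : R × ZMod 3 × KleinFour) :
    (shift d j e p).1 ≠ p.1 := by
  obtain ⟨a, i, g⟩ := p
  have h1 (f : Bool) : sgn R f * d ≠ 0 := fun h => h0 (by
    linear_combination sgn R f * h - d * sgn_mul_sgn (R := R) f)
  rcases level_cases i j with rfl | rfl | rfl
  · simp [shift_same, h1]
  · rw [shift_down]
    exact fun h => h1 (KleinFour.form g == e) (Z.eq_of_two_mul_eq (by linear_combination h))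
  · simp [shift_up, h1]

theorem shift_shift (d : R) (j : ZMod 3) (e : Bool) (p : R × ZMod 3 × KleinFour) :
    shift d j e (shift d j e p) = p := by
  obtain ⟨a, i, g⟩ := p
  rcases level_cases i j with rfl | rfl | rfl
  · rw [shift_same, shift_up, KleinFour.add_add_root, add_sub_cancel_right]
  · have h : ((!KleinFour.form g) == e) = !(KleinFour.form g == e) := by
      cases KleinFour.form g <;> cases e <;> rfl
    rw [shift_down, shift_down, KleinFour.form_add_one, KleinFour.add_add_one, h, sgn_not]
    congr 1
    ring
  · rw [shift_up, shift_same, KleinFour.add_add_root, sub_add_cancel]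

theorem third_shift {d : R} (h0 : d ≠ 0) (hd : Z.pos d = true) (j : ZMod 3) (e : Bool)
    (p : R × ZMod 3 × KleinFour) :
    ∃ k f, Z.third p (shift d j e p) = shift d k f p := by
  obtain ⟨a, i, g⟩ := p
  rcases level_cases i j with rfl | rfl | rfl
  · refine ⟨j + 1, KleinFour.form g == e, ?_⟩
    have h : (KleinFour.form g == (KleinFour.form g == e)) = e := by
      cases KleinFour.form g <;> cases e <;> rfl
    rw [shift_same, third_up, shift_down, add_sub_cancel_left, Z.pos_sgn_mul h0 hd,
      KleinFour.mix_add_root_left, h]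
    congr 1
    ring
  · refine ⟨i, KleinFour.form g == e, ?_⟩
    have h1 (t : R) : Z.half * (a + 2 * t - a) = t := by
      linear_combination t * Z.two_mul_half
    have h2 (t : R) : Z.half * (a + (a + 2 * t)) = a + t := by
      linear_combination (a + t) * Z.two_mul_half
    rw [shift_down, third_same, shift_same, h1, h2, Z.pos_sgn_mul h0 hd, KleinFour.mix_add_one]
  · refine ⟨j, !e, ?_⟩
    rw [shift_up, third_down, shift_up, sub_sub_cancel, Z.pos_sgn_mul h0 hd,
      KleinFour.mix_add_root_right, sgn_not]
    congr 1
    ring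

theorem sgn_mul_inj {c d : R} (hc0 : c ≠ 0) (hc : Z.pos c = true) (hd0 : d ≠ 0)
    (hd : Z.pos d = true) {e f : Bool} (h : sgn R e * c = sgn R f * d) : e = f ∧ c = d := by
  have h1 : e = f := by rw [← Z.pos_sgn_mul hc0 hc e, h, Z.pos_sgn_mul hd0 hd]
  subst h1
  exact ⟨rfl, by linear_combination sgn R e * h - (c - d) * sgn_mul_sgn (R := R) e⟩

theorem shift_inj {c d : R} (hc0 : c ≠ 0) (hc : Z.pos c = true) (hd0 : d ≠ 0)
    (hd : Z.pos d = true) {j k : ZMod 3} {e f : Bool} {p : R × ZMod 3 × KleinFour}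
    (h : shift c j e p = shift d k f p) : c = d ∧ j = k ∧ e = f := by
  obtain ⟨a, i, g⟩ := p
  have h1 : ∀ i : ZMod 3, i + 1 ≠ i := by decide
  have h2 : ∀ i : ZMod 3, i + 1 + 1 ≠ i := by decide
  have key : j = k := by
    have h := congrArg (fun p => p.2.1) h
    rcases level_cases i j with rfl | rfl | rfl
    · rcases level_cases j k with rfl | rfl | rfl
      · rfl
      · rw [shift_same, shift_down] at h
        exact absurd h (h1 _)
      · rw [shift_same, shift_up] at h
        exact absurd h (h2 _)
    · rcases level_cases i k with rfl | rfl | rfl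
      · rw [shift_same, shift_down] at h
        exact absurd h (h1 _).symm
      · rfl
      · rw [shift_down, shift_up] at h
        exact absurd h (h1 _)
    · rcases level_cases (j + 1) k with rfl | rfl | h3
      · rw [shift_same, shift_up] at h
        exact absurd h (h2 _).symm
      · rw [shift_down, shift_up] at h
        exact absurd h (h1 _).symm
      · exact add_right_cancel h3
  subst key
  refine ⟨?_, rfl, ?_⟩ <;> rcases level_cases i j with rfl | rfl | rfl <;>
    simp only [shift_same, shift_up, shift_down, Prod.mk.injEq, add_right_inj, sub_right_inj] at h
  · exact (Z.sgn_mul_inj hc0 hc hd0 hd h.1).2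
  · exact (Z.sgn_mul_inj hc0 hc hd0 hd (Z.eq_of_two_mul_eq h.1)).2
  · exact (Z.sgn_mul_inj hc0 hc hd0 hd h.1).2
  · exact (Z.sgn_mul_inj hc0 hc hd0 hd h.1).1
  · have h3 := (Z.sgn_mul_inj hc0 hc hd0 hd (Z.eq_of_two_mul_eq h.1)).1
    revert h3
    cases KleinFour.form g <;> cases e <;> cases f <;> simp
  · exact (Z.sgn_mul_inj hc0 hc hd0 hd h.1).1

/-- The system with hole `X` enlarged by six points for every chosen positive difference. -/
def holedSystem {X : Type*} (E : HoledSystem X (ZMod 3 × KleinFour)) (D : Finset R)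
    (hD : ∀ d ∈ D, d ≠ 0 ∧ Z.pos d = true) :
    HoledSystem (X ⊕ {d // d ∈ D} × ZMod 3 × Bool) (R × ZMod 3 × KleinFour) :=
  (Z.design.fill E).adjoin (fun c => shift c.1.1 c.2.1 c.2.2)
    (fun _ _ => shift_ne _ _ _ _)
    (fun _ _ => shift_shift _ _ _ _)
    (fun c d p h => by
      obtain ⟨⟨c, hc⟩, j, e⟩ := c
      obtain ⟨⟨d, hd⟩, k, f⟩ := d
      obtain ⟨rfl, rfl, rfl⟩ := Z.shift_inj (hD c hc).1 (hD c hc).2 (hD d hd).1 (hD d hd).2 h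
      rfl)
    (fun c p => by
      obtain ⟨⟨c, hc⟩, j, e⟩ := c
      obtain ⟨k, f, h⟩ := Z.third_shift (hD c hc).1 (hD c hc).2 j e p
      refine ⟨(⟨c, hc⟩, k, f), ?_⟩
      rw [← h]
      exact if_neg (Z.shift_fst_ne (hD c hc).1 j e p).symm)

end SignedRing

namespace SteinerOp

/-- The translation invariant Steiner quasigroup on an abelian group whose triples through `0`
are `0, d, f d`. -/
def ofDifference {G : Type*} [AddCommGroup G] (f : G → G) (f_zero : f 0 = 0)
    (f_neg : ∀ d, f (-d) = f d - d) (f_f : ∀ d, f (f d) = d) : SteinerOp G where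
  op a b := a + f (b - a)
  idem a := by simp [f_zero]
  comm a b := by
    rw [← neg_sub a b, f_neg]
    abel
  cancel a b := by simp [f_f]

/-- The holed system obtained by removing the triples of a subsystem. -/
def punch {α : Type*} (S : SteinerOp α) (W : α → Prop)
    (hW : ∀ a b, W a → W b → W (S.op a b)) : HoledSystem {a // W a} {a // ¬ W a} where
  join p q := if h : W (S.op p q) then Sum.inl ⟨_, h⟩ else Sum.inr ⟨_, h⟩
  partner x p := ⟨S.op x p, fun h => p.2 (by
    have := hW _ _ x.2 h
    rwa [S.cancel] at this)⟩
  join_comm p q := by simp only [S.comm]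
  join_block p q r hpq h := by
    split_ifs at h with h0
    have hr := Sum.inr_injective h
    subst hr
    refine ⟨fun h1 => S.op_ne_left (fun h2 => hpq (Subtype.ext h2)) (congrArg Subtype.val h1), ?_⟩
    simp [S.cancel, q.2]
  partner_ne x p h := by
    refine S.op_ne_right (fun h1 => ?_) (congrArg Subtype.val h)
    exact p.2 (h1 ▸ x.2)
  join_partner x p := by
    have h : S.op p.1 (S.op x.1 p.1) = x.1 := by rw [S.comm x.1, S.cancel]
    simp [h, x.2]
  eq_partner p q x hpq h := by
    split_ifs at h with h0
    have hx := Sum.inl_injective h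
    subst hx
    apply Subtype.ext
    change q.1 = S.op (S.op p.1 q.1) p.1
    rw [S.comm _ p.1, S.cancel]

theorem nonempty_fin_one : Nonempty (SteinerOp (Fin 1)) :=
  ⟨ofDifference id rfl (by decide) (by decide)⟩

theorem nonempty_fin_three : Nonempty (SteinerOp (Fin 3)) :=
  ⟨ofDifference (fun d => -d) rfl (by decide) (by decide)⟩

theorem nonempty_fin_seven : Nonempty (SteinerOp (Fin 7)) :=
  ⟨ofDifference ![0, 3, 6, 1, 5, 4, 2] rfl (by decide) (by decide)⟩

theorem nonempty_fin_nine : Nonempty (SteinerOp (Fin 9)) :=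
  ⟨(ofDifference (G := ZMod 3 × ZMod 3) (fun d => -d) rfl (by decide) (by decide)).map
    (Fintype.equivFinOfCardEq (by decide))⟩

end SteinerOp

theorem HoledSystem.nonempty_of_card {X A Y B : Type*} [Fintype X] [Fintype A] [Fintype Y]
    [Fintype B] (E : HoledSystem X A) (hX : Fintype.card X = Fintype.card Y)
    (hA : Fintype.card A = Fintype.card B) : Nonempty (HoledSystem Y B) :=
  ⟨(E.map (Fintype.equivOfCardEq hA)).mapHole (Fintype.equivOfCardEq hX)⟩

theorem HoledSystem.nonempty_one_twelve :
    Nonempty (HoledSystem (Fin 1) (ZMod 3 × KleinFour)) := by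
  refine HoledSystem.nonempty_of_card ((SteinerOp.ofDifference (G := Fin 13)
    ![0, 4, 7, 12, 1, 11, 8, 2, 6, 10, 9, 5, 3] rfl (by decide) (by decide)).punch
    (fun a => a = 0) ?_) ?_ ?_
  · rintro _ _ rfl rfl
    rfl
  · simp
  · rw [Fintype.card_subtype_compl]
    simp [KleinFour, ZMod.card]

theorem HoledSystem.nonempty_three_twelve :
    Nonempty (HoledSystem (Fin 3) (ZMod 3 × KleinFour)) := by
  refine HoledSystem.nonempty_of_card ((SteinerOp.ofDifference (G := Fin 15)
    ![0, 4, 8, 14, 1, 10, 13, 9, 2, 7, 5, 12, 11, 6, 3] rfl (by decide) (by decide)).punch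
    (fun a => a ∈ ({0, 5, 10} : Finset (Fin 15))) ?_) ?_ ?_
  · intro a b ha hb
    simp only [Finset.mem_insert, Finset.mem_singleton] at ha hb
    rcases ha with rfl | rfl | rfl <;> rcases hb with rfl | rfl | rfl <;> decide
  · exact Fintype.card_of_subtype ({0, 5, 10} : Finset (Fin 15)) fun _ => Iff.rfl
  · rw [Fintype.card_of_subtype ({0, 5, 10} : Finset (Fin 15))ᶜ (by simp)]
    simp [KleinFour, ZMod.card, Finset.card_compl]

/-- The choice of the residues `1, …, m` modulo `2 m + 1`. -/
def SignedRing.zmod (m : ℕ) : SignedRing (ZMod (2 * m + 1)) where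
  half := ((m + 1 : ℕ) : ZMod (2 * m + 1))
  two_mul_half := by
    have h := ZMod.natCast_self (2 * m + 1)
    push_cast at h ⊢
    linear_combination h
  pos d := decide (d.val ≤ m)
  pos_neg d hd := by
    have : NeZero d := ⟨hd⟩
    have := d.val_lt
    rw [ZMod.val_neg_of_ne_zero, ← decide_not, decide_eq_decide]
    omega

theorem HoledSystem.nonempty_fin {h m q : ℕ} (hh : h = 1 ∨ h = 3) (hq : q ≤ m) :
    Nonempty (HoledSystem (Fin (h + 6 * q)) (Fin (12 * (2 * m + 1)))) := by
  obtain ⟨E⟩ : Nonempty (HoledSystem (Fin h) (ZMod 3 × KleinFour)) := by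
    rcases hh with rfl | rfl
    · exact nonempty_one_twelve
    · exact nonempty_three_twelve
  have hv : ∀ i ∈ Finset.Icc 1 q, ((i : ℕ) : ZMod (2 * m + 1)).val = i := fun i hi => by
    rw [Finset.mem_Icc] at hi
    exact ZMod.val_natCast_of_lt (by omega)
  have hcard : ((Finset.Icc 1 q).image fun i : ℕ => (i : ZMod (2 * m + 1))).card = q := by
    rw [Finset.card_image_of_injOn, Nat.card_Icc, Nat.add_sub_cancel]
    intro i hi j hj hij
    rw [← hv i hi, ← hv j hj]
    exact congrArg ZMod.val hij
  refine ((SignedRing.zmod m).holedSystem E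
    ((Finset.Icc 1 q).image fun i : ℕ => (i : ZMod (2 * m + 1))) ?_).nonempty_of_card ?_ ?_
  · intro d hd
    obtain ⟨i, hi, rfl⟩ := Finset.mem_image.1 hd
    have h1 := hv i hi
    rw [Finset.mem_Icc] at hi
    refine ⟨fun h0 => ?_, ?_⟩
    · rw [h0, ZMod.val_zero] at h1
      omega
    · simp only [SignedRing.zmod, h1, decide_eq_true_eq]
      omega
  · simp only [Fintype.card_sum, Fintype.card_prod, Fintype.card_fin, Fintype.card_coe, hcard,
      ZMod.card, Fintype.card_bool]
    omega
  · simp only [Fintype.card_prod, Fintype.card_fin, ZMod.card]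
    omega

namespace SteinerOp

theorem nonempty_fin_add {h m q : ℕ} (hh : h = 1 ∨ h = 3) (hq : q ≤ m)
    (hS : Nonempty (SteinerOp (Fin (h + 6 * q)))) :
    Nonempty (SteinerOp (Fin (h + 6 * q + 12 * (2 * m + 1)))) := by
  obtain ⟨S⟩ := hS
  obtain ⟨E⟩ := HoledSystem.nonempty_fin hh hq
  exact ⟨(E.toSteinerOp S).map finSumFinEquiv⟩

theorem nonempty_fin_of_mod {x : ℕ} (hx : 37 ≤ x)
    (h : x % 24 = 13 ∨ x % 24 = 15 ∨ x % 24 = 19 ∨ x % 24 = 21) :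
    Nonempty (SteinerOp (Fin x)) := by
  have key : ∃ h m q, (h = 1 ∨ h = 3) ∧ q ≤ 1 ∧ 1 ≤ m ∧ x = h + 6 * q + 12 * (2 * m + 1) := by
    rcases h with h | h | h | h
    · exact ⟨1, x / 24, 0, by omega⟩
    · exact ⟨3, x / 24, 0, by omega⟩
    · exact ⟨1, x / 24, 1, by omega⟩
    · exact ⟨3, x / 24, 1, by omega⟩
  obtain ⟨h, m, q, hh, hq, hm, rfl⟩ := key
  refine nonempty_fin_add hh (hq.trans hm) ?_
  rcases hh with rfl | rfl <;> rcases Nat.le_one_iff_eq_zero_or_eq_one.1 hq with rfl | rfl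
  · exact nonempty_fin_one
  · exact nonempty_fin_seven
  · exact nonempty_fin_three
  · exact nonempty_fin_nine

theorem nonempty_fin {x : ℕ} (hx : 225 ≤ x) (h : x % 6 = 1 ∨ x % 6 = 3) :
    Nonempty (SteinerOp (Fin x)) := by
  by_cases h1 : x % 24 = 13 ∨ x % 24 = 15 ∨ x % 24 = 19 ∨ x % 24 = 21
  · exact nonempty_fin_of_mod (by omega) h1
  · have key : ∃ h m q, (h = 1 ∨ h = 3) ∧ 6 ≤ q ∧ q ≤ 7 ∧ 7 ≤ m ∧
        x = h + 6 * q + 12 * (2 * m + 1) := by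
      have h2 : x % 24 = 1 ∨ x % 24 = 3 ∨ x % 24 = 7 ∨ x % 24 = 9 := by omega
      rcases h2 with h2 | h2 | h2 | h2
      · exact ⟨1, x / 24 - 2, 6, by omega⟩
      · exact ⟨3, x / 24 - 2, 6, by omega⟩
      · exact ⟨1, x / 24 - 2, 7, by omega⟩
      · exact ⟨3, x / 24 - 2, 7, by omega⟩
    obtain ⟨h, m, q, hh, hq6, hq7, hm, rfl⟩ := key
    refine nonempty_fin_add hh (hq7.trans hm) ?_
    have hq : q = 6 ∨ q = 7 := by omega
    rcases hh with rfl | rfl <;> rcases hq with rfl | rfl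
    all_goals exact nonempty_fin_of_mod (by norm_num) (by norm_num)

end SteinerOp

namespace SteinerOp

theorem exists_isFullHom {α : Type*} [Fintype α] [Nontrivial α] (S : SteinerOp α) :
    ∃ N : ℕ, ∀ u : ℕ, N ≤ u → u % 6 = 1 ∨ u % 6 = 3 →
      ∃ (U : SteinerOp (Fin u)) (φ : α → Fin u), S.IsFullHom U φ := by
  obtain ⟨v, hv⟩ : ∃ v, Fintype.card α = v := ⟨_, rfl⟩
  have hv0 : 0 < v := hv ▸ Fintype.card_pos
  refine ⟨12 * v + 225 + 24 * v * ((v + 8) * (225 + 24 * v)), fun u hu hmod => ?_⟩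
  obtain ⟨w, rfl⟩ : ∃ w, u = 12 * v + 225 + w := ⟨u - (12 * v + 225), by omega⟩
  obtain ⟨k, hk⟩ : ∃ k, w / (24 * v) = k := ⟨_, rfl⟩
  obtain ⟨r, hr⟩ : ∃ r, w % (24 * v) = r := ⟨_, rfl⟩
  have hkr := Nat.div_add_mod w (24 * v)
  rw [hk, hr] at hkr
  have hrlt : r < 24 * v := hr ▸ Nat.mod_lt _ (by omega)
  have hklt : (v + 8) * (225 + 24 * v) ≤ k := by
    rw [← hk, Nat.le_div_iff_mul_le (by omega), mul_comm]
    omega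
  have hvk : (v + 8) * (225 + 24 * v) = v * (225 + 24 * v) + 8 * (225 + 24 * v) := by ring
  have hvx : v * (225 + r) ≤ v * (225 + 24 * v) := Nat.mul_le_mul_left _ (by omega)
  have hsize : 12 * v + 225 + w = 225 + r + v * (12 * (2 * k + 1)) := by
    rw [← hkr]
    ring
  have hxmod : (225 + r) % 6 = (12 * v + 225 + w) % 6 := by
    rw [hsize, show v * (12 * (2 * k + 1)) = 6 * (v * (2 * (2 * k + 1))) by ring,
      Nat.add_mul_mod_self_left]
  obtain ⟨SX⟩ := nonempty_fin (x := 225 + r) (by omega) (by omega)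
  obtain ⟨h, q, hh, hx⟩ : ∃ h q, (h = 1 ∨ h = 3) ∧ 225 + r = h + 6 * q :=
    ⟨(225 + r) % 6, (225 + r) / 6, by omega, by omega⟩
  obtain ⟨E⟩ := HoledSystem.nonempty_fin (m := k) (q := q) hh (by omega)
  rw [← hx] at E
  have : NeZero (12 * (2 * k + 1)) := ⟨by omega⟩
  obtain ⟨e, he⟩ := E.exists_isRigidLabelling ⟨0, by omega⟩ (n := 12 * (2 * k + 1))
    (by omega) (by omega) (Fintype.card_fin _) (by rw [Fintype.card_fin]; omega)
  have hfull := isFullHom_moore (S := S) (SX := SX) he (by omega)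
    (by rw [Fintype.card_fin, hv]; omega) (by rw [hv]; omega)
  refine ⟨_, _, hfull.map (Fintype.equivFinOfCardEq ?_)⟩
  rw [Fintype.card_sum, Fintype.card_prod, Fintype.card_fin, ZMod.card, hv, hsize]

/-- A permutation invariant attached to a point `p`: the number of pairs `a, b` such that
`p, a, b` generate a Pasch configuration, or a degenerate form of it. -/
def paschCount {α : Type*} [Fintype α] [DecidableEq α] (op : α → α → α) (p : α) : ℕ :=
  (Finset.univ.filter fun x : α × α => op (op p x.1) (op p x.2) = op x.1 x.2).card

theorem paschCount_apply {α : Type*} [Fintype α] [DecidableEq α] {S : SteinerOp α}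
    {g : Equiv.Perm α} (hg : S.IsHom g) (p : α) :
    paschCount S.op (g p) = paschCount S.op p := by
  symm
  refine Finset.card_bij' (fun x _ => (g x.1, g x.2)) (fun x _ => (g.symm x.1, g.symm x.2))
    ?_ ?_ (fun x _ => by simp) (fun x _ => by simp)
  · intro x hx
    simp only [Finset.mem_filter, Finset.mem_univ, true_and] at hx ⊢
    rw [← hg, ← hg, ← hg, ← hg, hx]
  · intro x hx
    simp only [Finset.mem_filter, Finset.mem_univ, true_and] at hx ⊢
    apply g.injective
    simpa [hg _ _] using hx

/-- The multiplication table of a Steiner quasigroup without nontrivial automorphisms: the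
digits to the base `100` of the entry with index `a` are the products of `a` with `0, …, 14`,
from right to left. -/
def rigidTable : List ℕ :=
  [81009071312141103020106050400, 120914050813100302110007060104,
    71110131204031401000908020605, 131405090411020100121003080706,
    110507140302061208130410090001, 60403010708091014051312001102,
    51213101107040906140800010203, 20804000506130709101201140311,
    711120105081304090602031014, 100100031409050607080211041312,
    90002061014010511070304120813, 40208110603120010011409130507,
    10612080200110413030705101409, 31306020001070812040514110910,
    140301040910000205061113071208]

/-- The product with multiplication table `rigidTable`. -/
def rigidOp (a b : Fin 15) : Fin 15 :=
  Fin.ofNat 15 (rigidTable.getD a 0 / 100 ^ (b : ℕ) % 100)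

/-- A Steiner quasigroup without nontrivial automorphisms. -/
def rigid : SteinerOp (Fin 15) where
  op := rigidOp
  idem := by decide +kernel
  comm := by decide +kernel
  cancel := by decide +kernel

/-- The Pasch counts of the points of the rigid Steiner quasigroup. -/
def rigidCount (p : Fin 15) : ℕ :=
  [19, 15, 23, 39, 27, 31, 35, 35, 27, 31, 31, 31, 35, 31, 31].getD p 0

theorem paschCount_rigidOp (p : Fin 15) :
    paschCount rigidOp p = rigidCount p := by
  revert p
  decide +kernel

theorem eq_one_of_isHom_rigid {g : Equiv.Perm (Fin 15)} (hg : rigid.IsHom g) : g = 1 := by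
  have hop : ∀ a b c, rigidOp a b = c → g a = a → g b = b → g c = c := by
    rintro a b _ rfl ha hb
    exact (hg a b).trans (by rw [ha, hb]; rfl)
  have hcount := paschCount_apply hg
  simp only [rigid, paschCount_rigidOp] at hcount
  have hunique : ∀ p q : Fin 15, p ≤ 3 → rigidCount q = rigidCount p → q = p := by
    decide
  have h0 : g 0 = 0 := hunique _ _ (by decide) (hcount 0)
  have h1 : g 1 = 1 := hunique _ _ (by decide) (hcount 1)
  have h2 : g 2 = 2 := hunique _ _ (by decide) (hcount 2)
  have h3 : g 3 = 3 := hunique _ _ (by decide) (hcount 3)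
  have h4 : g 4 = 4 := hop 0 1 4 rfl h0 h1
  have h5 : g 5 = 5 := hop 0 2 5 rfl h0 h2
  have h6 : g 6 = 6 := hop 1 2 6 rfl h1 h2
  have h7 : g 7 = 7 := hop 1 3 7 rfl h1 h3
  have h8 : g 8 = 8 := hop 2 3 8 rfl h2 h3
  have h9 : g 9 = 9 := hop 2 4 9 rfl h2 h4
  have h10 : g 10 = 10 := hop 3 4 10 rfl h3 h4
  have h11 : g 11 = 11 := hop 1 5 11 rfl h1 h5
  have h12 : g 12 = 12 := hop 3 5 12 rfl h3 h5
  have h13 : g 13 = 13 := hop 4 5 13 rfl h4 h5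
  have h14 : g 14 = 14 := hop 5 6 14 rfl h5 h6
  ext p
  fin_cases p <;> simp [*]

theorem isHom_one {α : Type*} (S : SteinerOp α) : S.IsHom 1 := fun _ _ => rfl

theorem isFullHom_of_subsingleton {α β : Type*} [Subsingleton α] (S : SteinerOp α)
    {U : SteinerOp β} (hU : ∀ g, U.IsHom g → g = 1) (φ : α → β) : S.IsFullHom U φ where
  injective := Function.injective_of_subsingleton φ
  map_op a b := by rw [Subsingleton.elim b a, S.idem, U.idem]
  restrict g hg := ⟨1, S.isHom_one, fun x => by rw [hU g hg]; rfl⟩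
  extend h _ := ⟨1, ⟨U.isHom_one, fun x => by rw [Subsingleton.elim (h x) x]; rfl⟩,
    fun g hg => hU g hg.1⟩

theorem IsFullHom.eq_one {α β : Type*} {S : SteinerOp α} {U : SteinerOp β} {φ : α → β}
    (h : S.IsFullHom U φ) (hS : ∀ g, S.IsHom g → g = 1) {g : Equiv.Perm β} (hg : U.IsHom g) :
    g = 1 := by
  obtain ⟨k, hk, hgk⟩ := h.restrict g hg
  rw [hS k hk] at hgk
  exact (h.extend 1 S.isHom_one).unique ⟨hg, hgk⟩ ⟨U.isHom_one, fun _ => rfl⟩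

end SteinerOp

/-- **Theorem 1.2.** If `V_*` is a Steiner triple system then there is an integer
`N` such that, for `u ≥ N` and `u ≡ 1` or `3 (mod 6)`, there is a Steiner triple
system `U` on `u` points having `V_*` as an `Aut U`-invariant subsystem on which
`Aut U` induces `Aut V_*`, with `Aut U ≅ Aut V_*` via restriction. -/
theorem stmt1 {α : Type*} [Fintype α] (TV : Finset (Finset α)) (hV : IsSTS TV) :
    ∃ N : ℕ, ∀ u : ℕ, N ≤ u → u % 6 = 1 ∨ u % 6 = 3 →
      ∃ T : Finset (Finset (Fin u)), IsSTS T ∧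
        ∃ φ : α → Fin u, FullEmbedding TV T φ := by
  obtain ⟨S, rfl⟩ := SteinerOp.exists_triples_eq hV
  rcases subsingleton_or_nontrivial α with hα | hα
  · obtain ⟨N, hN⟩ := SteinerOp.rigid.exists_isFullHom
    refine ⟨N, fun u hu hmod => ?_⟩
    obtain ⟨U, φ, h⟩ := hN u hu hmod
    exact ⟨U.triples, U.isSTS_triples, fun _ => φ 0, (S.isFullHom_of_subsingleton
      (fun _ => h.eq_one fun _ => SteinerOp.eq_one_of_isHom_rigid) _).fullEmbedding⟩
  · obtain ⟨N, hN⟩ := S.exists_isFullHom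
    refine ⟨N, fun u hu hmod => ?_⟩
    obtain ⟨U, φ, h⟩ := hN u hu hmod
    exact ⟨U.triples, U.isSTS_triples, φ, h.fullEmbedding⟩

end
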